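/- arXiv:1109.4774 — 3 statements merged into one kernel-verified Lean document; each statement's English description precedes it below -/
import Mathlib

section
/- Let V be a seven-dimensional real vector space and let Ψ ∈ Λ⁴V* be a four-form for which there exists a basis e¹,…,e⁷ of V* with Ψ = e^{1234}+e^{1256}+e^{3456}−e^{2467}+e^{2357}+e^{1457}+e^{1367} (i.e. Ψ is the Hodge dual of a G₂-structure). Let α ∈ V* be nonzero and let W be any complement of span(α) in V*, and let Ω ∈ Λ⁴W and ρ ∈ Λ³W be the unique forms with Ψ = Ω + ρ∧α. Then (ρ(Ω), l(Ω), m(Ω), r(Ω)) = (6,3,2,1) and (ρ(ρ), l(ρ), m(ρ), r(ρ)) = (6,3,2,2), where the invariants of Ω and ρ are computed in the exterior algebra of the six-dimensional space W. -/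
open Module

section Machinery

variable {F : Type*} [Field F] {M : Type*} [AddCommGroup M] [Module F M]

/-- `X` is a decomposable `k`-vector, with factors taken from the ambient subspace `A`. -/
def Dec (A : Submodule F M) (k : ℕ) (X : ExteriorAlgebra F M) : Prop :=
  ∃ v : Fin k → M, (∀ i, v i ∈ A) ∧ X = (List.ofFn fun i => ExteriorAlgebra.ι F (v i)).prod

/-- `X` is a sum of `l` decomposable `k`-vectors with factors from `A`. -/
def LenLE (A : Submodule F M) (k l : ℕ) (X : ExteriorAlgebra F M) : Prop :=
  ∃ Y : Fin l → ExteriorAlgebra F M, (∀ i, Dec A k (Y i)) ∧ X = ∑ i, Y i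

/-- `X` has (irreducible) length `l` as a `k`-vector: it is a sum of `l` decomposable
`k`-vectors, and of no smaller number of them. -/
def HasLen (A : Submodule F M) (k l : ℕ) (X : ExteriorAlgebra F M) : Prop :=
  LenLE A k l X ∧ ∀ j < l, ¬ LenLE A k j X

/-- The (irreducible) length of the `k`-vector `X`. -/
noncomputable def len (A : Submodule F M) (k : ℕ) (X : ExteriorAlgebra F M) : ℕ :=
  sInf {l | LenLE A k l X}

/-- `X` belongs to `Λ^k W`, regarded as a subspace of the exterior algebra. -/
def memPow (W : Submodule F M) (k : ℕ) (X : ExteriorAlgebra F M) : Prop :=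
  X ∈ (W.map (ExteriorAlgebra.ι F)) ^ k

/-- The support `[X]` of the `k`-vector `X`: the intersection of all subspaces `W`
with `X ∈ Λ^k W`. -/
noncomputable def supp (k : ℕ) (X : ExteriorAlgebra F M) : Submodule F M :=
  sInf {W | memPow W k X}

/-- The rank `ρ(X) = dim [X]` of the `k`-vector `X`. -/
noncomputable def rkInv (k : ℕ) (X : ExteriorAlgebra F M) : ℕ :=
  Module.finrank F (supp k X)

/-- `(v, W, X₁, X₂)` is an admissible splitting `X = X₁ ∧ v + X₂` of the `k`-vector `X`:
`v ∈ [X] ∖ {0}`, `W` is a complement of `span v` in `[X]`, `X₁ ∈ Λ^(k-1) W` and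
`X₂ ∈ Λ^k W`. -/
def Split (k : ℕ) (X : ExteriorAlgebra F M) (v : M) (W : Submodule F M)
    (X₁ X₂ : ExteriorAlgebra F M) : Prop :=
  v ∈ supp k X ∧ v ≠ 0 ∧
    W ⊔ Submodule.span F {v} = supp k X ∧ W ⊓ Submodule.span F {v} = ⊥ ∧
    memPow W (k - 1) X₁ ∧ memPow W k X₂ ∧
    X = X₁ * ExteriorAlgebra.ι F v + X₂

/-- The invariant `m(X) = min { l(X₁) }` over all admissible splittings of `X`. -/
noncomputable def mInv (A : Submodule F M) (k : ℕ) (X : ExteriorAlgebra F M) : ℕ :=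
  sInf {l | ∃ v W X₁ X₂, Split k X v W X₁ X₂ ∧ HasLen A (k - 1) l X₁}

/-- The invariant `r(X) = min { l(X₂) }` over all admissible splittings of `X`. -/
noncomputable def rInv (A : Submodule F M) (k : ℕ) (X : ExteriorAlgebra F M) : ℕ :=
  sInf {l | ∃ v W X₁ X₂, Split k X v W X₁ X₂ ∧ HasLen A k l X₂}

end Machinery

/-- The wedge product `b i ∧ b j ∧ b k ∧ b l` of four vectors. -/
noncomputable def wedge4 {F : Type*} [Field F] {M : Type*} [AddCommGroup M] [Module F M]
    (b : Fin 7 → M) (i j k l : Fin 7) : ExteriorAlgebra F M :=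
  ExteriorAlgebra.ι F (b i) * ExteriorAlgebra.ι F (b j) *
    ExteriorAlgebra.ι F (b k) * ExteriorAlgebra.ι F (b l)

/-- The four-form `e^{1234}+e^{1256}+e^{3456}-e^{2467}+e^{2357}+e^{1457}+e^{1367}`
(the Hodge dual of a `G₂`-structure), written with `0`-based indices. -/
noncomputable def PsiPlus {F : Type*} [Field F] {M : Type*} [AddCommGroup M] [Module F M]
    (e : Fin 7 → M) : ExteriorAlgebra F M :=
  wedge4 e 0 1 2 3 + wedge4 e 0 1 4 5 + wedge4 e 2 3 4 5 - wedge4 e 1 3 5 6 +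
    wedge4 e 1 2 4 6 + wedge4 e 0 3 4 6 + wedge4 e 0 2 5 6


section G2
variable {M : Type*} [AddCommGroup M] [Module ℝ M]

/-- simultaneous rotation in the planes `(p,q)` and `(r,t)` -/
def rot (p q r t : Fin 7) (c s s' : ℝ) {N : Type*} [AddCommGroup N] [Module ℝ N]
    (e : Fin 7 → N) : Fin 7 → N := fun i =>
  if i = p then c • e p + s • e q else if i = q then (-s) • e p + c • e q
  else if i = r then c • e r + s' • e t else if i = t then (-s') • e r + c • e t else e i

/-- admissible pairs of planes -/
def Adm (p q r t : Fin 7) (ε : ℝ) : Prop :=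
  (p = 0 ∧ q = 1 ∧ r = 4 ∧ t = 5 ∧ ε = -1) ∨ (p = 2 ∧ q = 3 ∧ r = 4 ∧ t = 5 ∧ ε = -1) ∨
  (p = 5 ∧ q = 6 ∧ r = 0 ∧ t = 2 ∧ ε = -1) ∨ (p = 3 ∧ q = 1 ∧ r = 0 ∧ t = 2 ∧ ε = -1) ∨
  (p = 4 ∧ q = 6 ∧ r = 0 ∧ t = 3 ∧ ε = -1) ∨ (p = 1 ∧ q = 6 ∧ r = 2 ∧ t = 4 ∧ ε = -1)

structure G2Rel (e : Fin 7 → M) (a : Fin 7 → ℝ) (e' : Fin 7 → M) (a' : Fin 7 → ℝ) : Prop where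
  psi : PsiPlus (F := ℝ) e' = PsiPlus (F := ℝ) e
  sum : ∑ i, a' i • e' i = ∑ i, a i • e i
  ev : ∀ u : Module.Dual ℝ M, (∀ i, u (e i) = a i) → ∀ i, u (e' i) = a' i
  sp : Submodule.span ℝ (Set.range e) ≤ Submodule.span ℝ (Set.range e')

theorem G2Rel.trans {e : Fin 7 → M} {a e' a' e'' a''} (h : G2Rel e a e' a') (h' : G2Rel e' a' e'' a'') :
    G2Rel e a e'' a'' :=
  ⟨h'.psi.trans h.psi, h'.sum.trans h.sum, fun u hu => h'.ev u (h.ev u hu), h.sp.trans h'.sp⟩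

set_option maxHeartbeats 2000000 in
theorem psi_rot (p q r t : Fin 7) (ε c s : ℝ) (hA : Adm p q r t ε) (hcs : c ^ 2 + s ^ 2 = 1)
    (e : Fin 7 → M) : PsiPlus (F := ℝ) (rot p q r t c s (ε * s) e) = PsiPlus (F := ℝ) e := by
  obtain ⟨x, hx⟩ : ∃ x : Fin 7 → ExteriorAlgebra ℝ M, ∀ i, ExteriorAlgebra.ι ℝ (e i) = x i :=
    ⟨_, fun i => rfl⟩
  have h : ∀ i j, j < i → x i * x j = - (x j * x i) := by
    intro i j _
    rw [← hx, ← hx]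
    exact eq_neg_of_add_eq_zero_left (ExteriorAlgebra.ι_add_mul_swap _ _)
  have h0 : ∀ i, x i * x i = 0 := fun i => by rw [← hx]; exact ExteriorAlgebra.ι_sq_zero _
  have h' : ∀ i j, j < i → ∀ y, x i * (x j * y) = - (x j * (x i * y)) := by
    intro i j hij y; rw [← mul_assoc, h i j hij]; simp [mul_assoc]
  have h0' : ∀ i y, x i * (x i * y) = 0 := by intro i y; rw [← mul_assoc, h0]; simp
  rcases hA with H | H | H | H | H | H <;> obtain ⟨rfl, rfl, rfl, rfl, rfl⟩ := H <;>
  · simp [PsiPlus, wedge4, rot, hx, mul_add, add_mul, mul_assoc, h, h', h0, h0', smul_smul]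
    match_scalars <;>
      first
      | ring1
      | linear_combination hcs
      | linear_combination -hcs
      | linear_combination (c^2+s^2+1) * hcs
      | linear_combination (c^2+s^2) * hcs

set_option maxHeartbeats 1000000 in
theorem rel_rot (p q r t : Fin 7) (ε c s : ℝ) (hA : Adm p q r t ε) (hcs : c ^ 2 + s ^ 2 = 1)
    (e : Fin 7 → M) (a : Fin 7 → ℝ) :
    G2Rel e a (rot p q r t c s (ε * s) e) (rot p q r t c s (ε * s) a) := by
  refine ⟨psi_rot p q r t ε c s hA hcs e, ?_, ?_, ?_⟩
  · rcases hA with H | H | H | H | H | H <;> obtain ⟨rfl, rfl, rfl, rfl, rfl⟩ := H <;>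
    · simp [Fin.sum_univ_seven, rot]
      match_scalars <;>
        first
        | ring1
        | linear_combination (a 0) * hcs
        | linear_combination (a 1) * hcs
        | linear_combination (a 2) * hcs
        | linear_combination (a 3) * hcs
        | linear_combination (a 4) * hcs
        | linear_combination (a 5) * hcs
        | linear_combination (a 6) * hcs
  · intro u hu i
    simp only [rot]
    split_ifs <;> simp [hu]
  · rw [Submodule.span_le]
    rintro _ ⟨i, rfl⟩
    set e' := rot p q r t c s (ε * s) e with he'
    have hm : ∀ i, e' i ∈ Submodule.span ℝ (Set.range e') :=
      fun i => Submodule.subset_span ⟨i, rfl⟩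
    have key : e i = if i = p then c • e' p - s • e' q else if i = q then s • e' p + c • e' q
        else if i = r then c • e' r - (ε * s) • e' t
        else if i = t then (ε * s) • e' r + c • e' t else e' i := by
      rcases hA with H | H | H | H | H | H <;> obtain ⟨rfl, rfl, rfl, rfl, rfl⟩ := H <;>
      fin_cases i <;> simp [he', rot] <;> match_scalars <;>
        first
        | ring1
        | linear_combination hcs
        | linear_combination -hcs
    rw [key]
    have hs := fun (k : ℝ) i => Submodule.smul_mem _ k (hm i)
    split_ifs
    · exact sub_mem (hs _ _) (hs _ _)
    · exact add_mem (hs _ _) (hs _ _)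
    · exact sub_mem (hs _ _) (hs _ _)
    · exact add_mem (hs _ _) (hs _ _)
    · exact hm i

theorem exists_cs (x y : ℝ) : ∃ c s : ℝ, c ^ 2 + s ^ 2 = 1 ∧ c * x + s * y = 0 := by
  by_cases h : x ^ 2 + y ^ 2 = 0
  · have hx : x = 0 := by nlinarith [sq_nonneg x, sq_nonneg y]
    have hy : y = 0 := by nlinarith [sq_nonneg x, sq_nonneg y]
    exact ⟨1, 0, by simp, by simp [hx]⟩
  · have hp : 0 < x ^ 2 + y ^ 2 := lt_of_le_of_ne (by positivity) (Ne.symm h)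
    have hr := Real.sq_sqrt hp.le
    have hr0 : √(x ^ 2 + y ^ 2) ≠ 0 := (Real.sqrt_pos.2 hp).ne'
    refine ⟨y / √(x ^ 2 + y ^ 2), -x / √(x ^ 2 + y ^ 2), ?_, ?_⟩
    · field_simp
      rw [hr]; ring
    · field_simp
      ring

theorem rel_step (p q r t : Fin 7) (ε : ℝ) (hA : Adm p q r t ε)
    (e : Fin 7 → M) (a : Fin 7 → ℝ) :
    ∃ e' a', G2Rel e a e' a' ∧ a' p = 0 ∧ (∀ i, i ≠ p → i ≠ q → i ≠ r → i ≠ t → a' i = a i) ∧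
      (a r = 0 → a t = 0 → a' r = 0 ∧ a' t = 0) := by
  obtain ⟨c, s, hcs, h0⟩ := exists_cs (a p) (a q)
  refine ⟨_, _, rel_rot p q r t ε c s hA hcs e a, ?_, ?_, ?_⟩
  · simpa [rot] using h0
  · intro i h1 h2 h3 h4
    simp [rot, h1, h2, h3, h4]
  · intro h1 h2
    rcases hA with H | H | H | H | H | H <;> obtain ⟨rfl, rfl, rfl, rfl, rfl⟩ := H <;>
      simp [rot, h1, h2]

theorem transitive (e : Fin 7 → M) (a : Fin 7 → ℝ) :
    ∃ e' a', G2Rel e a e' a' ∧ ∀ i, i ≠ 6 → a' i = 0 := by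
  obtain ⟨e1, a1, R1, z1, k1, -⟩ := rel_step 0 1 4 5 (-1) (by simp [Adm]) e a
  obtain ⟨e2, a2, R2, z2, k2, -⟩ := rel_step 2 3 4 5 (-1) (by simp [Adm]) e1 a1
  obtain ⟨e3, a3, R3, z3, k3, l3⟩ := rel_step 5 6 0 2 (-1) (by simp [Adm]) e2 a2
  obtain ⟨e4, a4, R4, z4, k4, l4⟩ := rel_step 3 1 0 2 (-1) (by simp [Adm]) e3 a3
  obtain ⟨e5, a5, R5, z5, k5, l5⟩ := rel_step 4 6 0 3 (-1) (by simp [Adm]) e4 a4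
  obtain ⟨e6, a6, R6, z6, k6, l6⟩ := rel_step 1 6 2 4 (-1) (by simp [Adm]) e5 a5
  refine ⟨e6, a6, ((((R1.trans R2).trans R3).trans R4).trans R5).trans R6, ?_⟩
  have h20 : a2 0 = 0 := by rw [k2 0 (by decide) (by decide) (by decide) (by decide), z1]
  obtain ⟨h30, h32⟩ := l3 h20 z2
  obtain ⟨h40, h42⟩ := l4 h30 h32
  have h45 : a4 5 = 0 := by rw [k4 5 (by decide) (by decide) (by decide) (by decide), z3]
  obtain ⟨h50, h53⟩ := l5 h40 z4
  have h55 : a5 5 = 0 := by rw [k5 5 (by decide) (by decide) (by decide) (by decide), h45]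
  have h52 : a5 2 = 0 := by rw [k5 2 (by decide) (by decide) (by decide) (by decide), h42]
  obtain ⟨h62, h64⟩ := l6 h52 z5
  have h60 : a6 0 = 0 := by rw [k6 0 (by decide) (by decide) (by decide) (by decide), h50]
  have h63 : a6 3 = 0 := by rw [k6 3 (by decide) (by decide) (by decide) (by decide), h53]
  have h65 : a6 5 = 0 := by rw [k6 5 (by decide) (by decide) (by decide) (by decide), h55]
  intro i hi
  fin_cases i <;> simp_all

end G2

section Contr
variable {M : Type*} [AddCommGroup M] [Module ℝ M]

/-- right contraction -/
noncomputable def cD (d : Module.Dual ℝ M) : ExteriorAlgebra ℝ M →ₗ[ℝ] ExteriorAlgebra ℝ M :=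
  (CliffordAlgebra.contractRight (Q := (0 : QuadraticForm ℝ M))).flip d

theorem cD_mul (d : Module.Dual ℝ M) (x : ExteriorAlgebra ℝ M) (a : M) :
    cD d (x * ExteriorAlgebra.ι ℝ a) = d a • x - cD d x * ExteriorAlgebra.ι ℝ a :=
  CliffordAlgebra.contractRight_mul_ι (Q := (0 : QuadraticForm ℝ M)) (d := d) a x

theorem cD_one (d : Module.Dual ℝ M) : cD d (1 : ExteriorAlgebra ℝ M) = 0 :=
  CliffordAlgebra.contractRight_one (Q := (0 : QuadraticForm ℝ M)) (d := d)

theorem cD_ι (d : Module.Dual ℝ M) (a : M) :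
    cD d (ExteriorAlgebra.ι ℝ a) = d a • (1 : ExteriorAlgebra ℝ M) := by
  have := cD_mul d 1 a
  simpa [cD_one] using this

theorem cD_comm (d d' : Module.Dual ℝ M) (x : ExteriorAlgebra ℝ M) :
    cD d (cD d' x) = - cD d' (cD d x) :=
  CliffordAlgebra.contractRight_comm (Q := (0 : QuadraticForm ℝ M)) (d := d') (d' := d) x

theorem cD_self (d : Module.Dual ℝ M) (x : ExteriorAlgebra ℝ M) : cD d (cD d x) = 0 :=
  CliffordAlgebra.contractRight_contractRight (Q := (0 : QuadraticForm ℝ M)) (d := d) x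

theorem cD_memPow (d : Module.Dual ℝ M) (U : Submodule ℝ M) (k : ℕ) :
    ∀ X, memPow U (k + 1) X → memPow U k (cD d X) := by
  induction k with
  | zero =>
    intro X hX
    simp only [memPow, zero_add, pow_one, pow_zero] at hX ⊢
    obtain ⟨a, -, rfl⟩ := hX
    rw [cD_ι]
    exact Submodule.smul_mem _ _ (Submodule.one_le.1 le_rfl)
  | succ k ih =>
    intro X hX
    unfold memPow at hX
    rw [pow_succ] at hX
    induction hX using Submodule.mul_induction_on' with
    | mem_mul_mem m hm n hn =>
      obtain ⟨a, ha, rfl⟩ := hn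
      rw [cD_mul]
      refine sub_mem (Submodule.smul_mem _ _ hm) ?_
      rw [pow_succ]
      exact Submodule.mul_mem_mul (ih m hm) ⟨a, ha, rfl⟩
    | add x hx y hy h1 h2 => rw [map_add]; exact add_mem h1 h2

theorem cD_kill (d : Module.Dual ℝ M) (U : Submodule ℝ M) (hd : ∀ x ∈ U, d x = 0) (k : ℕ) :
    ∀ X, memPow U k X → cD d X = 0 := by
  induction k with
  | zero =>
    intro X hX
    simp only [memPow, pow_zero] at hX
    obtain ⟨r, rfl⟩ := Submodule.mem_one.1 hX
    rw [Algebra.algebraMap_eq_smul_one, map_smul, cD_one, smul_zero]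
  | succ k ih =>
    intro X hX
    unfold memPow at hX
    rw [pow_succ] at hX
    induction hX using Submodule.mul_induction_on' with
    | mem_mul_mem m hm n hn =>
      obtain ⟨a, ha, rfl⟩ := hn
      rw [cD_mul, hd a ha, ih m hm]
      simp
    | add x hx y hy h1 h2 => rw [map_add, h1, h2, add_zero]

theorem memPow_one {U : Submodule ℝ M} {X} (h : memPow U 1 X) :
    ∃ x ∈ U, ExteriorAlgebra.ι ℝ x = X := by
  simpa [memPow] using h

theorem memPow_mul {U : Submodule ℝ M} {k X} {x : M} (h : memPow U k X) (hx : x ∈ U) :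
    memPow U (k + 1) (X * ExteriorAlgebra.ι ℝ x) := by
  unfold memPow
  rw [pow_succ]
  exact Submodule.mul_mem_mul h ⟨x, hx, rfl⟩

theorem memPow_ι {U : Submodule ℝ M} {x : M} (hx : x ∈ U) :
    memPow U 1 (ExteriorAlgebra.ι ℝ x) := by
  simpa [memPow] using hx

theorem sq0 (a : M) : ExteriorAlgebra.ι ℝ a * ExteriorAlgebra.ι ℝ a = 0 :=
  ExteriorAlgebra.ι_sq_zero a

theorem sw (a b : M) : ExteriorAlgebra.ι ℝ a * ExteriorAlgebra.ι ℝ b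
    = - (ExteriorAlgebra.ι ℝ b * ExteriorAlgebra.ι ℝ a) :=
  eq_neg_of_add_eq_zero_left (ExteriorAlgebra.ι_add_mul_swap _ _)

theorem sw' (y : ExteriorAlgebra ℝ M) (a b : M) : y * ExteriorAlgebra.ι ℝ a * ExteriorAlgebra.ι ℝ b
    = - (y * ExteriorAlgebra.ι ℝ b * ExteriorAlgebra.ι ℝ a) := by
  rw [mul_assoc, sw, mul_neg, mul_assoc]

theorem sq0' (y : ExteriorAlgebra ℝ M) (a : M) :
    y * ExteriorAlgebra.ι ℝ a * ExteriorAlgebra.ι ℝ a = 0 := by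
  rw [mul_assoc, sq0, mul_zero]

theorem dec2 {A : Submodule ℝ M} {X} (h : Dec A 2 X) : ∃ a b, a ∈ A ∧ b ∈ A ∧
    X = ExteriorAlgebra.ι ℝ a * ExteriorAlgebra.ι ℝ b := by
  obtain ⟨v, hv, rfl⟩ := h
  exact ⟨v 0, v 1, hv _, hv _, by simp [List.ofFn_succ]⟩

theorem dec3 {A : Submodule ℝ M} {X} (h : Dec A 3 X) : ∃ a b c, a ∈ A ∧ b ∈ A ∧ c ∈ A ∧
    X = ExteriorAlgebra.ι ℝ a * ExteriorAlgebra.ι ℝ b * ExteriorAlgebra.ι ℝ c := by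
  obtain ⟨v, hv, rfl⟩ := h
  exact ⟨v 0, v 1, v 2, hv _, hv _, hv _, by simp [List.ofFn_succ, mul_assoc]⟩

theorem dec4 {A : Submodule ℝ M} {X} (h : Dec A 4 X) : ∃ a b c d, a ∈ A ∧ b ∈ A ∧ c ∈ A ∧ d ∈ A ∧
    X = ExteriorAlgebra.ι ℝ a * ExteriorAlgebra.ι ℝ b * ExteriorAlgebra.ι ℝ c
      * ExteriorAlgebra.ι ℝ d := by
  obtain ⟨v, hv, rfl⟩ := h
  exact ⟨v 0, v 1, v 2, v 3, hv _, hv _, hv _, hv _, by simp [List.ofFn_succ, mul_assoc]⟩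

theorem mk2 {A : Submodule ℝ M} {a b : M} (ha : a ∈ A) (hb : b ∈ A) :
    Dec A 2 (ExteriorAlgebra.ι ℝ a * ExteriorAlgebra.ι ℝ b) :=
  ⟨![a, b], by intro i; fin_cases i <;> assumption, by simp [List.ofFn_succ]⟩

theorem mk3 {A : Submodule ℝ M} {a b c : M} (ha : a ∈ A) (hb : b ∈ A) (hc : c ∈ A) :
    Dec A 3 (ExteriorAlgebra.ι ℝ a * ExteriorAlgebra.ι ℝ b * ExteriorAlgebra.ι ℝ c) :=
  ⟨![a, b, c], by intro i; fin_cases i <;> assumption, by simp [List.ofFn_succ, mul_assoc]⟩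

theorem mk4 {A : Submodule ℝ M} {a b c d : M} (ha : a ∈ A) (hb : b ∈ A) (hc : c ∈ A) (hd : d ∈ A) :
    Dec A 4 (ExteriorAlgebra.ι ℝ a * ExteriorAlgebra.ι ℝ b * ExteriorAlgebra.ι ℝ c
      * ExteriorAlgebra.ι ℝ d) :=
  ⟨![a, b, c, d], by intro i; fin_cases i <;> assumption, by simp [List.ofFn_succ, mul_assoc]⟩

theorem dec_zero (A : Submodule ℝ M) (k : ℕ) : Dec A (k + 1) 0 :=
  ⟨0, by simp, by simp [List.ofFn_succ]⟩

theorem lenLE_succ {A : Submodule ℝ M} {k l X} (h : LenLE A (k + 1) l X) :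
    LenLE A (k + 1) (l + 1) X := by
  obtain ⟨Y, hY, rfl⟩ := h
  refine ⟨Fin.snoc Y 0, ?_, ?_⟩
  · intro i
    refine Fin.lastCases ?_ (fun j => ?_) i
    · simpa using dec_zero A k
    · simpa using hY j
  · simp [Fin.sum_univ_castSucc]

theorem lenLE_mono {A : Submodule ℝ M} {k l l' X} (h : LenLE A (k + 1) l X) (hl : l ≤ l') :
    LenLE A (k + 1) l' X := by
  induction hl with
  | refl => exact h
  | step _ ih => exact lenLE_succ ih

theorem lenLE1 {A : Submodule ℝ M} {k X} (h : Dec A k X) : LenLE A k 1 X :=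
  ⟨fun _ => X, fun _ => h, by simp⟩
theorem lenLE2 {A : Submodule ℝ M} {k X Y} (h : Dec A k X) (h' : Dec A k Y) : LenLE A k 2 (X + Y) :=
  ⟨![X, Y], by intro i; fin_cases i <;> assumption, by simp⟩
theorem lenLE3 {A : Submodule ℝ M} {k X Y Z} (h : Dec A k X) (h' : Dec A k Y) (h'' : Dec A k Z) :
    LenLE A k 3 (X + Y + Z) :=
  ⟨![X, Y, Z], by intro i; fin_cases i <;> assumption, by simp [Fin.sum_univ_three]⟩

theorem of_lenLE1 {A : Submodule ℝ M} {k X} (h : LenLE A k 1 X) : Dec A k X := by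
  obtain ⟨Y, hY, rfl⟩ := h
  simpa using hY 0
theorem of_lenLE2 {A : Submodule ℝ M} {k X} (h : LenLE A k 2 X) :
    ∃ Y Z, Dec A k Y ∧ Dec A k Z ∧ X = Y + Z := by
  obtain ⟨Y, hY, rfl⟩ := h
  exact ⟨Y 0, Y 1, hY _, hY _, by simp⟩

theorem hasLen_of {A : Submodule ℝ M} {k l X} (h : LenLE A (k + 1) (l + 1) X)
    (h' : ¬ LenLE A (k + 1) l X) : HasLen A (k + 1) (l + 1) X :=
  ⟨h, fun _ hj hL => h' (lenLE_mono hL (Nat.lt_succ_iff.1 hj))⟩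

theorem sInf_eq {S : Set ℕ} {l : ℕ} (h : l ∈ S) (h' : ∀ j ∈ S, l ≤ j) : sInf S = l :=
  le_antisymm (Nat.sInf_le h) (h' _ (Nat.sInf_mem ⟨l, h⟩))

theorem len_eq {A : Submodule ℝ M} {k l X} (h : LenLE A (k + 1) (l + 1) X)
    (h' : ¬ LenLE A (k + 1) l X) : len A (k + 1) X = l + 1 :=
  sInf_eq h fun j hj => by
    by_contra hc
    exact h' (lenLE_mono hj (by omega))

theorem mInv_eq {A : Submodule ℝ M} {k l X} (h : ∃ v W X₁ X₂, Split (k + 2) X v W X₁ X₂ ∧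
      LenLE A (k + 1) (l + 1) X₁)
    (h' : ∀ v W X₁ X₂, Split (k + 2) X v W X₁ X₂ → ¬ LenLE A (k + 1) l X₁) :
    mInv A (k + 2) X = l + 1 := by
  obtain ⟨v, W, X₁, X₂, hS, hL⟩ := h
  refine sInf_eq ⟨v, W, X₁, X₂, hS, hasLen_of hL (h' _ _ _ _ hS)⟩ ?_
  rintro j ⟨v, W, X₁, X₂, hS, hL, -⟩
  by_contra hc
  exact h' _ _ _ _ hS (lenLE_mono hL (by omega))

theorem rInv_eq {A : Submodule ℝ M} {k l X} (h : ∃ v W X₁ X₂, Split (k + 1) X v W X₁ X₂ ∧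
      LenLE A (k + 1) (l + 1) X₂)
    (h' : ∀ v W X₁ X₂, Split (k + 1) X v W X₁ X₂ → ¬ LenLE A (k + 1) l X₂) :
    rInv A (k + 1) X = l + 1 := by
  obtain ⟨v, W, X₁, X₂, hS, hL⟩ := h
  refine sInf_eq ⟨v, W, X₁, X₂, hS, hasLen_of hL (h' _ _ _ _ hS)⟩ ?_
  rintro j ⟨v, W, X₁, X₂, hS, hL, -⟩
  by_contra hc
  exact h' _ _ _ _ hS (lenLE_mono hL (by omega))

/-- decomposable 3-vectors satisfy Pluecker-type relations -/
theorem pl3 {A : Submodule ℝ M} {X} (h : Dec A 3 X) (a b : Module.Dual ℝ M) :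
    X * cD a (cD b X) = 0 := by
  obtain ⟨x, y, z, -, -, -, rfl⟩ := dec3 h
  have hx : x ∈ Submodule.span ℝ {x, y, z} := Submodule.subset_span (by simp)
  have hy : y ∈ Submodule.span ℝ {x, y, z} := Submodule.subset_span (by simp)
  have hz : z ∈ Submodule.span ℝ {x, y, z} := Submodule.subset_span (by simp)
  obtain ⟨w, hw, hw'⟩ := memPow_one (cD_memPow a _ _ _ (cD_memPow b _ _ _
    (memPow_mul (memPow_mul (memPow_ι hx) hy) hz)))
  rw [← hw']
  clear hw'
  induction hw using Submodule.span_induction with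
  | mem w hw =>
    rcases hw with rfl | rfl | rfl
    · rw [sw' _ z, sw w y]; simp [sq0']
    · rw [sw', sq0']; simp
    · rw [sq0']
  | zero => simp
  | add p q _ _ h1 h2 => rw [map_add, mul_add, h1, h2, add_zero]
  | smul r p _ h1 => rw [map_smul, mul_smul_comm, h1, smul_zero]

theorem pl4 {A : Submodule ℝ M} {Y} (h : Dec A 4 Y) (g a b : Module.Dual ℝ M) :
    cD g Y * cD a (cD b (cD g Y)) = 0 := by
  obtain ⟨x, y, z, t, -, -, -, -, rfl⟩ := dec4 h
  have hx : x ∈ Submodule.span ℝ {x, y, z, t} := Submodule.subset_span (by simp)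
  have hy : y ∈ Submodule.span ℝ {x, y, z, t} := Submodule.subset_span (by simp)
  have hz : z ∈ Submodule.span ℝ {x, y, z, t} := Submodule.subset_span (by simp)
  have ht : t ∈ Submodule.span ℝ {x, y, z, t} := Submodule.subset_span (by simp)
  set Y := ExteriorAlgebra.ι ℝ x * ExteriorAlgebra.ι ℝ y * ExteriorAlgebra.ι ℝ z
      * ExteriorAlgebra.ι ℝ t with hY
  obtain ⟨w, hw, hw'⟩ := memPow_one (cD_memPow a _ _ _ (cD_memPow b _ _ _ (cD_memPow g _ _ _
    (memPow_mul (memPow_mul (memPow_mul (memPow_ι hx) hy) hz) ht))))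
  rw [← hY] at hw'
  rw [← hw']
  have hg : g w • (1 : ExteriorAlgebra ℝ M) = 0 := by
    rw [← cD_ι, hw', cD_comm g a, cD_comm g b, cD_self]; simp
  have hg0 : g w = 0 := by simpa using hg
  have key : Y * ExteriorAlgebra.ι ℝ w = 0 := by
    clear hw' hg hg0
    induction hw using Submodule.span_induction with
    | mem w hw =>
      rcases hw with rfl | rfl | rfl | rfl
      · rw [hY, sw' _ t, sw' _ z, sw w y]; simp [sq0']
      · rw [hY, sw', sw' _ z, sq0']; simp
      · rw [hY, sw', sq0']; simp
      · rw [hY, sq0']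
    | zero => simp
    | add p q _ _ h1 h2 => rw [map_add, mul_add, h1, h2, add_zero]
    | smul r p _ h1 => rw [map_smul, mul_smul_comm, h1, smul_zero]
  have := cD_mul g Y w
  rw [key, hg0] at this
  simpa using this.symm

end Contr

section Core
variable {M : Type*} [AddCommGroup M] [Module ℝ M]

/-- normal form of the four-form -/
noncomputable def Om0 (f : Fin 6 → M) : ExteriorAlgebra ℝ M :=
  ExteriorAlgebra.ι ℝ (f 0) * ExteriorAlgebra.ι ℝ (f 1) * ExteriorAlgebra.ι ℝ (f 2) *
    ExteriorAlgebra.ι ℝ (f 3) +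
  ExteriorAlgebra.ι ℝ (f 0) * ExteriorAlgebra.ι ℝ (f 1) * ExteriorAlgebra.ι ℝ (f 4) *
    ExteriorAlgebra.ι ℝ (f 5) +
  ExteriorAlgebra.ι ℝ (f 2) * ExteriorAlgebra.ι ℝ (f 3) * ExteriorAlgebra.ι ℝ (f 4) *
    ExteriorAlgebra.ι ℝ (f 5)

/-- normal form of the three-form -/
noncomputable def P0 (f : Fin 6 → M) : ExteriorAlgebra ℝ M :=
  -(ExteriorAlgebra.ι ℝ (f 1) * ExteriorAlgebra.ι ℝ (f 3) * ExteriorAlgebra.ι ℝ (f 5)) +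
  ExteriorAlgebra.ι ℝ (f 1) * ExteriorAlgebra.ι ℝ (f 2) * ExteriorAlgebra.ι ℝ (f 4) +
  ExteriorAlgebra.ι ℝ (f 0) * ExteriorAlgebra.ι ℝ (f 3) * ExteriorAlgebra.ι ℝ (f 4) +
  ExteriorAlgebra.ι ℝ (f 0) * ExteriorAlgebra.ι ℝ (f 2) * ExteriorAlgebra.ι ℝ (f 5)

theorem cD_add' (d : Module.Dual ℝ M) (x y : ExteriorAlgebra ℝ M) :
    cD d (x + y) = cD d x + cD d y := map_add _ _ _
theorem cD_sub' (d : Module.Dual ℝ M) (x y : ExteriorAlgebra ℝ M) :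
    cD d (x - y) = cD d x - cD d y := map_sub _ _ _
theorem cD_neg' (d : Module.Dual ℝ M) (x : ExteriorAlgebra ℝ M) :
    cD d (-x) = -cD d x := map_neg _ _
theorem cD_zero' (d : Module.Dual ℝ M) : cD d (0 : ExteriorAlgebra ℝ M) = 0 := map_zero _
theorem cD_smul' (d : Module.Dual ℝ M) (r : ℝ) (x : ExteriorAlgebra ℝ M) :
    cD d (r • x) = r • cD d x := map_smul _ _ _
theorem d_add' (d : Module.Dual ℝ M) (x y : M) : d (x + y) = d x + d y := map_add _ _ _
theorem d_sub' (d : Module.Dual ℝ M) (x y : M) : d (x - y) = d x - d y := map_sub _ _ _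
theorem d_zero' (d : Module.Dual ℝ M) : d (0 : M) = 0 := map_zero _
theorem d_smul' (d : Module.Dual ℝ M) (r : ℝ) (x : M) : d (r • x) = r * d x := by simp

theorem cD_P0 (f : Fin 6 → M) (g : Module.Dual ℝ M) : cD g (P0 f) =
    g (f 0) • (ExteriorAlgebra.ι ℝ (f 3) * ExteriorAlgebra.ι ℝ (f 4)) +
    g (f 0) • (ExteriorAlgebra.ι ℝ (f 2) * ExteriorAlgebra.ι ℝ (f 5)) +
    g (f 1) • (ExteriorAlgebra.ι ℝ (f 2) * ExteriorAlgebra.ι ℝ (f 4)) -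
    g (f 1) • (ExteriorAlgebra.ι ℝ (f 3) * ExteriorAlgebra.ι ℝ (f 5)) -
    g (f 2) • (ExteriorAlgebra.ι ℝ (f 1) * ExteriorAlgebra.ι ℝ (f 4)) -
    g (f 2) • (ExteriorAlgebra.ι ℝ (f 0) * ExteriorAlgebra.ι ℝ (f 5)) +
    g (f 3) • (ExteriorAlgebra.ι ℝ (f 1) * ExteriorAlgebra.ι ℝ (f 5)) -
    g (f 3) • (ExteriorAlgebra.ι ℝ (f 0) * ExteriorAlgebra.ι ℝ (f 4)) +
    g (f 4) • (ExteriorAlgebra.ι ℝ (f 1) * ExteriorAlgebra.ι ℝ (f 2)) +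
    g (f 4) • (ExteriorAlgebra.ι ℝ (f 0) * ExteriorAlgebra.ι ℝ (f 3)) -
    g (f 5) • (ExteriorAlgebra.ι ℝ (f 1) * ExteriorAlgebra.ι ℝ (f 3)) +
    g (f 5) • (ExteriorAlgebra.ι ℝ (f 0) * ExteriorAlgebra.ι ℝ (f 2)) := by
  simp only [P0, map_add, map_neg, cD_mul, cD_ι, sub_mul, smul_mul_assoc, one_mul]
  module

theorem notP (f : Fin 6 → M) (d : Fin 6 → Module.Dual ℝ M)
    (hd : ∀ i j, d i (f j) = if i = j then 1 else 0) (g : Module.Dual ℝ M)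
    (h : ∀ a, cD g (P0 f) * cD a (cD g (P0 f)) = 0) : ∀ i, g (f i) = 0 := by
  have key : ∀ a p q r, cD (d p) (cD (d q) (cD (d r)
      (cD g (P0 f) * cD (d a) (cD g (P0 f))))) = 0 := by
    intro a p q r; rw [h]; simp
  have k1 := key 5 2 3 4
  have k2 := key 5 0 1 4
  have k3 := key 3 0 1 2
  clear key
  have e5 : cD (d 5) (cD g (P0 f)) = ExteriorAlgebra.ι ℝ
      (g (f 0) • f 2 - g (f 1) • f 3 - g (f 2) • f 0 + g (f 3) • f 1) := by
    rw [cD_P0]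
    simp [cD_mul, cD_ι, hd]
  have e3 : cD (d 3) (cD g (P0 f)) = ExteriorAlgebra.ι ℝ
      (-g (f 0) • f 4 + g (f 1) • f 5 + g (f 4) • f 0 - g (f 5) • f 1) := by
    rw [cD_P0]
    simp [cD_mul, cD_ι, hd]
  rw [e5, cD_P0] at k1 k2
  rw [e3, cD_P0] at k3
  clear e5 e3 h
  simp only [cD_mul, cD_ι, cD_one, cD_add', cD_sub', cD_neg', cD_zero', cD_smul', d_add', d_sub',
    d_zero', d_smul', hd, Fin.reduceEq, if_true, if_false, zero_smul, one_smul, zero_mul, sub_zero,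
    zero_sub, smul_zero, add_zero, zero_add, neg_mul, smul_mul_assoc, one_mul, mul_zero, mul_one,
    neg_zero, smul_neg, neg_neg] at k1 k2 k3
  simp [hd, smul_smul, ← add_smul, ← sub_smul, ← neg_smul] at k1 k2 k3
  intro i
  fin_cases i <;> simp <;> nlinarith [sq_nonneg (g (f 0)), sq_nonneg (g (f 1)), sq_nonneg (g (f 2)),
    sq_nonneg (g (f 3)), sq_nonneg (g (f 4)), sq_nonneg (g (f 5))]

theorem cD_Om0 (f : Fin 6 → M) (g : Module.Dual ℝ M) : cD g (Om0 f) =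
    0 -
    g (f 0) • (ExteriorAlgebra.ι ℝ (f 1) * ExteriorAlgebra.ι ℝ (f 2) * ExteriorAlgebra.ι ℝ (f 3)) +
    g (f 1) • (ExteriorAlgebra.ι ℝ (f 0) * ExteriorAlgebra.ι ℝ (f 2) * ExteriorAlgebra.ι ℝ (f 3)) -
    g (f 2) • (ExteriorAlgebra.ι ℝ (f 0) * ExteriorAlgebra.ι ℝ (f 1) * ExteriorAlgebra.ι ℝ (f 3)) +
    g (f 3) • (ExteriorAlgebra.ι ℝ (f 0) * ExteriorAlgebra.ι ℝ (f 1) * ExteriorAlgebra.ι ℝ (f 2)) -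
    g (f 0) • (ExteriorAlgebra.ι ℝ (f 1) * ExteriorAlgebra.ι ℝ (f 4) * ExteriorAlgebra.ι ℝ (f 5)) +
    g (f 1) • (ExteriorAlgebra.ι ℝ (f 0) * ExteriorAlgebra.ι ℝ (f 4) * ExteriorAlgebra.ι ℝ (f 5)) -
    g (f 4) • (ExteriorAlgebra.ι ℝ (f 0) * ExteriorAlgebra.ι ℝ (f 1) * ExteriorAlgebra.ι ℝ (f 5)) +
    g (f 5) • (ExteriorAlgebra.ι ℝ (f 0) * ExteriorAlgebra.ι ℝ (f 1) * ExteriorAlgebra.ι ℝ (f 4)) -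
    g (f 2) • (ExteriorAlgebra.ι ℝ (f 3) * ExteriorAlgebra.ι ℝ (f 4) * ExteriorAlgebra.ι ℝ (f 5)) +
    g (f 3) • (ExteriorAlgebra.ι ℝ (f 2) * ExteriorAlgebra.ι ℝ (f 4) * ExteriorAlgebra.ι ℝ (f 5)) -
    g (f 4) • (ExteriorAlgebra.ι ℝ (f 2) * ExteriorAlgebra.ι ℝ (f 3) * ExteriorAlgebra.ι ℝ (f 5)) +
    g (f 5) • (ExteriorAlgebra.ι ℝ (f 2) * ExteriorAlgebra.ι ℝ (f 3) * ExteriorAlgebra.ι ℝ (f 4)) := by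
  simp only [Om0, map_add, cD_mul, cD_ι, sub_mul, smul_mul_assoc, one_mul]
  module

set_option maxHeartbeats 1000000 in
theorem notOm (f : Fin 6 → M) (d : Fin 6 → Module.Dual ℝ M)
    (hd : ∀ i j, d i (f j) = if i = j then 1 else 0) (g : Module.Dual ℝ M)
    (h : ∀ a b, cD g (Om0 f) * cD a (cD b (cD g (Om0 f))) = 0) : ∀ i, g (f i) = 0 := by
  have key : ∀ a b p q r t x, cD (d a) (cD (d b) (cD g (Om0 f))) = ExteriorAlgebra.ι ℝ x →
      cD (d p) (cD (d q) (cD (d r) (cD (d t)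
      (cD g (Om0 f) * ExteriorAlgebra.ι ℝ x)))) = 0 := by
    intro a b p q r t x hx; rw [← hx, h]; simp
  have k0 := key 1 2 3 1 4 5 (0 - g (f 0) • f 3 + g (f 3) • f 0)
    (by rw [cD_Om0]; simp [cD_mul, cD_ι, hd]; try abel)
  have k1 := key 0 2 3 0 4 5 (0 + g (f 1) • f 3 - g (f 3) • f 1)
    (by rw [cD_Om0]; simp [cD_mul, cD_ι, hd]; try abel)
  have k2 := key 3 0 1 3 4 5 (0 + g (f 1) • f 2 - g (f 2) • f 1)
    (by rw [cD_Om0]; simp [cD_mul, cD_ι, hd]; try abel)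
  have k3 := key 2 0 1 2 4 5 (0 - g (f 1) • f 3 + g (f 3) • f 1)
    (by rw [cD_Om0]; simp [cD_mul, cD_ι, hd]; try abel)
  have k4 := key 5 0 1 5 2 3 (0 + g (f 1) • f 4 - g (f 4) • f 1)
    (by rw [cD_Om0]; simp [cD_mul, cD_ι, hd]; try abel)
  have k5 := key 4 0 1 4 2 3 (0 - g (f 1) • f 5 + g (f 5) • f 1)
    (by rw [cD_Om0]; simp [cD_mul, cD_ι, hd]; try abel)
  clear key h
  rw [cD_Om0] at k0 k1 k2 k3 k4 k5
  simp only [cD_mul, cD_ι, cD_one, cD_add', cD_sub', cD_neg', cD_zero', cD_smul', d_add', d_sub',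
    d_zero', d_smul', hd, Fin.reduceEq, if_true, if_false, zero_smul, one_smul, zero_mul, sub_zero,
    zero_sub, smul_zero, add_zero, zero_add, neg_mul, smul_mul_assoc, one_mul, mul_zero, mul_one,
    neg_zero, smul_neg, neg_neg] at k0 k1 k2 k3 k4 k5
  simp [hd, smul_smul, ← add_smul, ← sub_smul, ← neg_smul] at k0 k1 k2 k3 k4 k5
  intro i
  fin_cases i <;> simp <;> assumption

end Core
open Module

section Fin
variable {M : Type*} [AddCommGroup M] [Module ℝ M]

theorem li_of_dual {n : ℕ} (f : Fin n → M) (d : Fin n → Module.Dual ℝ M)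
    (hd : ∀ i j, d i (f j) = if i = j then 1 else 0) : LinearIndependent ℝ f := by
  rw [Fintype.linearIndependent_iff]
  intro c hc i
  have := congrArg (d i) hc
  simpa [hd] using this

theorem exists_g (f : Fin 6 → M) (d : Fin 6 → Module.Dual ℝ M)
    (hd : ∀ i j, d i (f j) = if i = j then 1 else 0) (S : Finset M) (hS : S.card < 6) :
    ∃ g : Module.Dual ℝ M, (∀ x ∈ S, g x = 0) ∧ ¬ ∀ i, g (f i) = 0 := by
  by_contra hcon
  push Not at hcon
  have hsub : Submodule.span ℝ (Set.range f) ≤ Submodule.span ℝ (S : Set M) := by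
    rw [Submodule.span_le]
    rintro _ ⟨i, rfl⟩
    by_contra hi
    obtain ⟨g, hg, hk⟩ := Submodule.exists_le_ker_of_notMem hi
    exact hg (hcon g (fun x hx => hk (Submodule.subset_span hx)) i)
  have h1 := finrank_span_eq_card (li_of_dual f d hd)
  have h2 := finrank_span_finset_le_card (R := ℝ) S
  have h3 := Submodule.finrank_mono hsub
  rw [h1] at h3
  simp [Set.finrank] at h3 h2
  omega

theorem split_g {k : ℕ} {X v U X₁ X₂} {W : Submodule ℝ M} (hS : Split (F := ℝ) (M := M) k X v U X₁ X₂)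
    (hW : supp k X = W) : ∃ g : Module.Dual ℝ M, cD g X = X₁ ∧ ¬ ∀ x ∈ W, g x = 0 := by
  obtain ⟨hv, hv0, h1, h2, h3, h4, h5⟩ := hS
  have hvU : v ∉ U := by
    intro h
    have : v ∈ U ⊓ Submodule.span ℝ {v} := ⟨h, Submodule.mem_span_singleton_self v⟩
    rw [h2] at this
    exact hv0 (by simpa using this)
  obtain ⟨g, hg, hk⟩ := Submodule.exists_le_ker_of_notMem hvU
  have hk' : ∀ x ∈ U, ((g v)⁻¹ • g) x = 0 := by
    intro x hx
    have : g x = 0 := hk hx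
    simp [this]
  refine ⟨(g v)⁻¹ • g, ?_, ?_⟩
  · have h5' := congrArg (cD ((g v)⁻¹ • g)) h5
    rw [map_add, cD_mul, cD_kill _ U hk' _ _ h3, cD_kill _ U hk' _ _ h4] at h5'
    simpa [hg] using h5'
  · intro h
    have := h v (hW ▸ hv)
    simp [hg] at this

theorem zero_on_W (f : Fin 6 → M) (W : Submodule ℝ M) (hW : Submodule.span ℝ (Set.range f) = W)
    (g : Module.Dual ℝ M) (h : ∀ i, g (f i) = 0) : ∀ x ∈ W, g x = 0 := by
  have : W ≤ LinearMap.ker g := by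
    rw [← hW, Submodule.span_le]
    rintro _ ⟨i, rfl⟩
    exact h i
  exact fun x hx => this hx

theorem split_f0 (f : Fin 6 → M) (d : Fin 6 → Module.Dual ℝ M)
    (hd : ∀ i j, d i (f j) = if i = j then 1 else 0) (W : Submodule ℝ M)
    (hW : Submodule.span ℝ (Set.range f) = W) :
    f 0 ∈ W ∧ f 0 ≠ 0 ∧
    Submodule.span ℝ {f 1, f 2, f 3, f 4, f 5} ⊔ Submodule.span ℝ {f 0} = W ∧
    Submodule.span ℝ {f 1, f 2, f 3, f 4, f 5} ⊓ Submodule.span ℝ {f 0} = ⊥ := by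
  refine ⟨hW ▸ Submodule.subset_span ⟨0, rfl⟩, fun h => ?_, ?_, ?_⟩
  · have := hd 0 0
    simp [h] at this
  · rw [← Submodule.span_union, ← hW]
    congr 1
    ext x
    simp only [Set.mem_union, Set.mem_insert_iff, Set.mem_singleton_iff, Set.mem_range,
      Fin.exists_fin_succ]
    simp
    grind
  · rw [eq_bot_iff]
    rintro x ⟨h1, h2⟩
    obtain ⟨c, rfl⟩ := Submodule.mem_span_singleton.1 h2
    have h3 : Submodule.span ℝ {f 1, f 2, f 3, f 4, f 5} ≤ LinearMap.ker (d 0) := by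
      rw [Submodule.span_le]
      rintro _ (rfl | rfl | rfl | rfl | rfl) <;> simp [hd]
    have : d 0 (c • f 0) = 0 := h3 h1
    simp [hd] at this
    simp [this]

theorem le_supp {k : ℕ} {X : ExteriorAlgebra ℝ M} {x : M}
    (h : ∀ U, memPow U k X → x ∈ U) : x ∈ supp k X := by
  simp only [supp, Submodule.mem_sInf]
  exact h

theorem supp_eq {k : ℕ} (f : Fin 6 → M) (W : Submodule ℝ M)
    (hW : Submodule.span ℝ (Set.range f) = W) {X : ExteriorAlgebra ℝ M}
    (hX : memPow W k X) (h : ∀ U, memPow U k X → ∀ i, f i ∈ U) : supp k X = W := by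
  apply le_antisymm
  · exact sInf_le hX
  · rw [← hW, Submodule.span_le]
    rintro _ ⟨i, rfl⟩
    exact le_supp fun U hU => h U hU i

theorem mem_of_ι {U : Submodule ℝ M} {x : M} {X} (h : memPow U 1 X)
    (hx : X = ExteriorAlgebra.ι ℝ x) : x ∈ U := by
  obtain ⟨y, hy, hy'⟩ := memPow_one h
  rw [hx, ExteriorAlgebra.ι_inj] at hy'
  exact hy' ▸ hy

theorem memPow_neg {U : Submodule ℝ M} {k X} (h : memPow U k X) : memPow U k (-X) :=
  neg_mem h
theorem memPow_add {U : Submodule ℝ M} {k X Y} (h : memPow U k X) (h' : memPow U k Y) :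
    memPow U k (X + Y) := add_mem h h'

theorem coreP (f : Fin 6 → M) (d : Fin 6 → Module.Dual ℝ M)
    (hd : ∀ i j, d i (f j) = if i = j then 1 else 0) (W : Submodule ℝ M)
    (hW : Submodule.span ℝ (Set.range f) = W) :
    rkInv (F := ℝ) 3 (P0 f) = 6 ∧ len W 3 (P0 f) = 3 ∧ mInv W 3 (P0 f) = 2 ∧
      rInv W 3 (P0 f) = 2 := by
  have hf : ∀ i, f i ∈ W := fun i => hW ▸ Submodule.subset_span ⟨i, rfl⟩
  have hm : memPow W 3 (P0 f) := by
    have := fun i j k => memPow_mul (memPow_mul (memPow_ι (hf i)) (hf j)) (hf k)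
    exact memPow_add (memPow_add (memPow_add (memPow_neg (this _ _ _)) (this _ _ _))
      (this _ _ _)) (this _ _ _)
  have hs : supp 3 (P0 f) = W := by
    refine supp_eq f W hW hm fun U hU => ?_
    have key := fun a b => cD_memPow (d a) _ _ _ (cD_memPow (d b) _ _ _ hU)
    intro i
    fin_cases i
    · exact mem_of_ι (key 2 5) (by simp [P0, cD_mul, cD_ι, hd])
    · exact mem_of_ι (key 2 4) (by simp [P0, cD_mul, cD_ι, hd])
    · exact mem_of_ι (key 5 0) (by simp [P0, cD_mul, cD_ι, hd])
    · exact mem_of_ι (key 4 0) (by simp [P0, cD_mul, cD_ι, hd])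
    · exact mem_of_ι (key 1 2) (by simp [P0, cD_mul, cD_ι, hd])
    · exact mem_of_ι (key 0 2) (by simp [P0, cD_mul, cD_ι, hd])
  have hno : ∀ g : Module.Dual ℝ M, (∃ x y, cD g (P0 f) = ExteriorAlgebra.ι ℝ x *
      ExteriorAlgebra.ι ℝ y) → ∀ i, g (f i) = 0 := by
    rintro g ⟨x, y, hxy⟩
    refine notP f d hd g fun a => ?_
    rw [hxy, cD_mul, cD_ι, mul_sub, smul_mul_assoc, one_mul, mul_smul_comm, mul_smul_comm, sq0',
      sw x y, neg_mul, sq0']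
    simp
  have hu : ∀ i, i ≠ 0 → f i ∈ Submodule.span ℝ {f 1, f 2, f 3, f 4, f 5} := fun i hi =>
    Submodule.subset_span (by fin_cases i <;> simp at hi ⊢)
  have hsp : Split 3 (P0 f) (f 0) (Submodule.span ℝ {f 1, f 2, f 3, f 4, f 5})
      (ExteriorAlgebra.ι ℝ (f 3) * ExteriorAlgebra.ι ℝ (f 4) +
        ExteriorAlgebra.ι ℝ (f 2) * ExteriorAlgebra.ι ℝ (f 5))
      (ExteriorAlgebra.ι ℝ (-f 1) * ExteriorAlgebra.ι ℝ (f 3) * ExteriorAlgebra.ι ℝ (f 5) +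
        ExteriorAlgebra.ι ℝ (f 1) * ExteriorAlgebra.ι ℝ (f 2) * ExteriorAlgebra.ι ℝ (f 4)) := by
    obtain ⟨s1, s2, s3, s4⟩ := split_f0 f d hd W hW
    unfold Split
    rw [hs]
    refine ⟨s1, s2, s3, s4, ?_, ?_, ?_⟩
    · exact memPow_add (memPow_mul (memPow_ι (hu _ (by decide))) (hu _ (by decide)))
        (memPow_mul (memPow_ι (hu _ (by decide))) (hu _ (by decide)))
    · exact memPow_add
        (memPow_mul (memPow_mul (memPow_ι (neg_mem (hu _ (by decide)))) (hu _ (by decide))) (hu _ (by decide)))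
        (memPow_mul (memPow_mul (memPow_ι (hu _ (by decide))) (hu _ (by decide))) (hu _ (by decide)))
    · rw [add_mul, sw' _ (f 4) (f 0), sw (f 3) (f 0), sw' _ (f 5) (f 0), sw (f 2) (f 0)]
      simp only [P0, map_neg, neg_mul, neg_neg]
      abel
  refine ⟨?_, ?_, ?_, ?_⟩
  · rw [rkInv, hs, ← hW, finrank_span_eq_card (li_of_dual f d hd)]; simp
  · refine len_eq (l := 2) ?_ ?_
    · have e : P0 f = ExteriorAlgebra.ι ℝ ((1 / 2 : ℝ) • (f 0 + f 1)) * ExteriorAlgebra.ι ℝ (f 2 + f 3)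
            * ExteriorAlgebra.ι ℝ (f 5 + f 4) +
          ExteriorAlgebra.ι ℝ ((1 / 2 : ℝ) • (f 0 - f 1)) * ExteriorAlgebra.ι ℝ (f 2 - f 3)
            * ExteriorAlgebra.ι ℝ (f 5 - f 4) +
          ExteriorAlgebra.ι ℝ ((-2 : ℝ) • f 1) * ExteriorAlgebra.ι ℝ (f 3)
            * ExteriorAlgebra.ι ℝ (f 5) := by
        simp only [P0, map_smul, map_add, map_sub, mul_add, add_mul, mul_sub, sub_mul,
          smul_mul_assoc]
        module
      rw [e]
      exact lenLE3 (mk3 (W.smul_mem _ (add_mem (hf _) (hf _))) (add_mem (hf _) (hf _)) (add_mem (hf _) (hf _)))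
        (mk3 (W.smul_mem _ (sub_mem (hf _) (hf _))) (sub_mem (hf _) (hf _)) (sub_mem (hf _) (hf _)))
        (mk3 (W.smul_mem _ (hf _)) (hf _) (hf _))
    · intro h
      obtain ⟨Y, Z, hY, hZ, e⟩ := of_lenLE2 h
      obtain ⟨a, b, c, -, -, -, rfl⟩ := dec3 hY
      obtain ⟨a', b', c', -, -, -, rfl⟩ := dec3 hZ
      classical
      obtain ⟨g, hg, hn⟩ := exists_g f d hd {b, c, a', b', c'}
        (lt_of_le_of_lt (Finset.card_le_five) (by norm_num))
      refine hn (hno g ⟨g a • b, c, ?_⟩)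
      rw [e]
      have h1 := hg b (by simp)
      have h2 := hg c (by simp)
      have h3 := hg a' (by simp)
      have h4 := hg b' (by simp)
      have h5 := hg c' (by simp)
      simp [cD_mul, cD_ι, h1, h2, h3, h4, h5]
  · refine mInv_eq (k := 1) (l := 1) ?_ ?_
    · exact ⟨_, _, _, _, hsp, lenLE2 (mk2 (hf _) (hf _)) (mk2 (hf _) (hf _))⟩
    · intro v U X₁ X₂ hS hL
      obtain ⟨g, hg, hn⟩ := split_g hS hs
      obtain ⟨x, y, -, -, e⟩ := dec2 (of_lenLE1 hL)
      exact hn (zero_on_W f W hW g (hno g ⟨x, y, hg.trans e⟩))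
  · refine rInv_eq (k := 2) (l := 1) ?_ ?_
    · exact ⟨_, _, _, _, hsp, lenLE2 (mk3 (neg_mem (hf _)) (hf _) (hf _)) (mk3 (hf _) (hf _) (hf _))⟩
    · rintro v U X₁ X₂ ⟨hv, hv0, h1, h2, h3, h4, h5⟩ hL
      obtain ⟨a, b, c, -, -, -, rfl⟩ := dec3 (of_lenLE1 hL)
      classical
      obtain ⟨g, hg, hn⟩ := exists_g f d hd {a, b, c, v}
        (lt_of_le_of_lt (Finset.card_le_four) (by norm_num))
      obtain ⟨y, -, hy⟩ := memPow_one (cD_memPow g _ _ _ h3)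
      refine hn (hno g ⟨-y, v, ?_⟩)
      have k1 := hg a (by simp)
      have k2 := hg b (by simp)
      have k3 := hg c (by simp)
      have k4 := hg v (by simp)
      rw [h5]
      simp [cD_mul, cD_ι, k1, k2, k3, k4, hy]

set_option maxHeartbeats 2000000 in
theorem coreOm (f : Fin 6 → M) (d : Fin 6 → Module.Dual ℝ M)
    (hd : ∀ i j, d i (f j) = if i = j then 1 else 0) (W : Submodule ℝ M)
    (hW : Submodule.span ℝ (Set.range f) = W) :
    rkInv (F := ℝ) 4 (Om0 f) = 6 ∧ len W 4 (Om0 f) = 3 ∧ mInv W 4 (Om0 f) = 2 ∧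
      rInv W 4 (Om0 f) = 1 := by
  have hf : ∀ i, f i ∈ W := fun i => hW ▸ Submodule.subset_span ⟨i, rfl⟩
  have hm : memPow W 4 (Om0 f) := by
    have := fun i j k l => memPow_mul (memPow_mul (memPow_mul (memPow_ι (hf i)) (hf j)) (hf k)) (hf l)
    exact memPow_add (memPow_add (this _ _ _ _) (this _ _ _ _)) (this _ _ _ _)
  have hs : supp 4 (Om0 f) = W := by
    refine supp_eq f W hW hm fun U hU => ?_
    have key := fun a b c => cD_memPow (d a) _ _ _ (cD_memPow (d b) _ _ _ (cD_memPow (d c) _ _ _ hU))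
    intro i
    fin_cases i
    · exact mem_of_ι (key 1 2 3) (by simp [Om0, cD_mul, cD_ι, hd])
    · exact mem_of_ι (key 0 3 2) (by simp [Om0, cD_mul, cD_ι, hd])
    · exact mem_of_ι (key 0 1 3) (by simp [Om0, cD_mul, cD_ι, hd])
    · exact mem_of_ι (key 1 0 2) (by simp [Om0, cD_mul, cD_ι, hd])
    · exact mem_of_ι (key 0 1 5) (by simp [Om0, cD_mul, cD_ι, hd])
    · exact mem_of_ι (key 1 0 4) (by simp [Om0, cD_mul, cD_ι, hd])
  have hu : ∀ i, i ≠ 0 → f i ∈ Submodule.span ℝ {f 1, f 2, f 3, f 4, f 5} := fun i hi =>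
    Submodule.subset_span (by fin_cases i <;> simp at hi ⊢)
  have hsp : Split 4 (Om0 f) (f 0) (Submodule.span ℝ {f 1, f 2, f 3, f 4, f 5})
      (ExteriorAlgebra.ι ℝ (-f 1) * ExteriorAlgebra.ι ℝ (f 2) * ExteriorAlgebra.ι ℝ (f 3) +
        ExteriorAlgebra.ι ℝ (-f 1) * ExteriorAlgebra.ι ℝ (f 4) * ExteriorAlgebra.ι ℝ (f 5))
      (ExteriorAlgebra.ι ℝ (f 2) * ExteriorAlgebra.ι ℝ (f 3) * ExteriorAlgebra.ι ℝ (f 4) *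
        ExteriorAlgebra.ι ℝ (f 5)) := by
    obtain ⟨s1, s2, s3, s4⟩ := split_f0 f d hd W hW
    unfold Split
    rw [hs]
    refine ⟨s1, s2, s3, s4, ?_, ?_, ?_⟩
    · exact memPow_add
        (memPow_mul (memPow_mul (memPow_ι (neg_mem (hu _ (by decide)))) (hu _ (by decide))) (hu _ (by decide)))
        (memPow_mul (memPow_mul (memPow_ι (neg_mem (hu _ (by decide)))) (hu _ (by decide))) (hu _ (by decide)))
    · exact memPow_mul (memPow_mul (memPow_mul (memPow_ι (hu _ (by decide))) (hu _ (by decide)))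
        (hu _ (by decide))) (hu _ (by decide))
    · rw [add_mul, sw' _ (f 3) (f 0), sw' _ (f 2) (f 0), sw' _ (f 5) (f 0), sw' _ (f 4) (f 0),
        sw (-f 1) (f 0)]
      simp only [Om0, map_neg, neg_mul, neg_neg, mul_neg]
  refine ⟨?_, ?_, ?_, ?_⟩
  · rw [rkInv, hs, ← hW, finrank_span_eq_card (li_of_dual f d hd)]; simp
  · refine len_eq (l := 2) ?_ ?_
    · exact lenLE3 (mk4 (hf _) (hf _) (hf _) (hf _)) (mk4 (hf _) (hf _) (hf _) (hf _))
        (mk4 (hf _) (hf _) (hf _) (hf _))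
    · intro h
      obtain ⟨Y, Z, hY, hZ, e⟩ := of_lenLE2 h
      obtain ⟨a', b', c', d', -, -, -, -, rfl⟩ := dec4 hZ
      classical
      obtain ⟨g, hg, hn⟩ := exists_g f d hd {a', b', c', d'}
        (lt_of_le_of_lt (Finset.card_le_four) (by norm_num))
      have h3 := hg a' (by simp)
      have h4 := hg b' (by simp)
      have h5 := hg c' (by simp)
      have h6 := hg d' (by simp)
      have e2 : cD g (Om0 f) = cD g Y := by
        rw [e]
        simp [cD_mul, cD_ι, h3, h4, h5, h6]
      refine hn (notOm f d hd g fun a b => ?_)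
      rw [e2]
      exact pl4 hY g a b
  · refine mInv_eq (k := 2) (l := 1) ?_ ?_
    · exact ⟨_, _, _, _, hsp, lenLE2 (mk3 (neg_mem (hf _)) (hf _) (hf _)) (mk3 (neg_mem (hf _)) (hf _) (hf _))⟩
    · intro v U X₁ X₂ hS hL
      obtain ⟨g, hg, hn⟩ := split_g hS hs
      refine hn (zero_on_W f W hW g (notOm f d hd g fun a b => ?_))
      rw [hg]
      exact pl3 (of_lenLE1 hL) a b
  · refine rInv_eq (k := 3) (l := 0) ?_ ?_
    · exact ⟨_, _, _, _, hsp, lenLE1 (mk4 (hf _) (hf _) (hf _) (hf _))⟩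
    · rintro v U X₁ X₂ ⟨hv, hv0, h1, h2, h3, h4, h5⟩ ⟨Y, -, hL⟩
      have hX : X₂ = 0 := by simpa using hL
      have h6 : Om0 f * ExteriorAlgebra.ι ℝ v = 0 := by
        rw [h5, hX, add_zero, sq0']
      have key : ∀ a b c p q, cD (d a) (cD (d b) (cD (d c) (cD (d p) (cD (d q)
          (Om0 f * ExteriorAlgebra.ι ℝ v))))) = 0 := by
        intro a b c p q
        simp [h6]
      have hz : ∀ i, d i v = 0 := by
        intro i
        fin_cases i
        · simpa [Om0, cD_mul, cD_ι, cD_one, hd, add_mul] using key 2 3 4 5 0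
        · simpa [Om0, cD_mul, cD_ι, cD_one, hd, add_mul] using key 2 3 4 5 1
        · simpa [Om0, cD_mul, cD_ι, cD_one, hd, add_mul] using key 0 1 4 5 2
        · simpa [Om0, cD_mul, cD_ι, cD_one, hd, add_mul] using key 0 1 4 5 3
        · simpa [Om0, cD_mul, cD_ι, cD_one, hd, add_mul] using key 0 1 2 3 4
        · simpa [Om0, cD_mul, cD_ι, cD_one, hd, add_mul] using key 0 1 2 3 5
      rw [hs, ← hW, Submodule.mem_span_range_iff_exists_fun] at hv
      obtain ⟨c, rfl⟩ := hv
      apply hv0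
      apply Finset.sum_eq_zero
      intro i _
      have := hz i
      simp [hd] at this
      simp [this]

end Fin

section Final
open Module
variable {M : Type*} [AddCommGroup M] [Module ℝ M]

theorem map_fix (p : M →ₗ[ℝ] M) (U : Submodule ℝ M) (hp : ∀ x ∈ U, p x = x) (k : ℕ) :
    ∀ X, memPow U k X → ExteriorAlgebra.map p X = X := by
  induction k with
  | zero =>
    intro X hX
    simp only [memPow, pow_zero, Submodule.mem_one] at hX
    obtain ⟨r, rfl⟩ := hX
    simp
  | succ k ih =>
    intro X hX
    unfold memPow at hX
    rw [pow_succ] at hX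
    induction hX using Submodule.mul_induction_on' with
    | mem_mul_mem x hx y hy =>
      obtain ⟨z, hz, rfl⟩ := hy
      rw [map_mul, ih x hx, ExteriorAlgebra.map_apply_ι, hp z hz]
    | add x _ y _ hx hy => rw [map_add, hx, hy]

theorem exists_coords (b : Basis (Fin 7) ℝ M) (e' : Fin 7 → M)
    (h : Submodule.span ℝ (Set.range b) ≤ Submodule.span ℝ (Set.range e')) :
    ∃ b' : Basis (Fin 7) ℝ M, ∀ i, b' i = e' i := by
  have hc : Fintype.card (Fin 7) = finrank ℝ M := (finrank_eq_card_basis b).symm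
  rw [b.span_eq] at h
  exact ⟨basisOfTopLeSpanOfCardEqFinrank e' h hc, fun i => by simp⟩

theorem final_Om (e : Basis (Fin 7) ℝ M) (α : M) (hα : α ≠ 0)
    (W : Submodule ℝ M) (hW : IsCompl (Submodule.span ℝ {α}) W)
    (Ω P : ExteriorAlgebra ℝ M) (hΩ : memPow W 4 Ω)
    (hdec : PsiPlus (F := ℝ) e = Ω + P * ExteriorAlgebra.ι ℝ α) :
    ∃ (f : Fin 6 → M) (d : Fin 6 → Module.Dual ℝ M),
      (∀ i j, d i (f j) = if i = j then 1 else 0) ∧ Submodule.span ℝ (Set.range f) = W ∧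
      Ω = Om0 f := by
  obtain ⟨e', a', R, hz⟩ := transitive e (fun i => e.repr α i)
  obtain ⟨b, hb⟩ := exists_coords e e' R.sp
  have hsum : α = a' 6 • b 6 := by
    have h1 := R.sum
    rw [e.sum_repr] at h1
    rw [← h1, hb, Finset.sum_eq_single 6]
    · intro i _ hi
      rw [hz i hi, zero_smul]
    · simp
  have ha : a' 6 ≠ 0 := by
    intro h
    exact hα (by rw [hsum, h, zero_smul])
  obtain ⟨p, hpW, hpf, hpα, hpd⟩ : ∃ p : M →ₗ[ℝ] M, (∀ x, p x ∈ W) ∧ (∀ x ∈ W, p x = x) ∧ p α = 0 ∧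
      ∀ x, x - p x ∈ Submodule.span ℝ {α} := by
    refine ⟨W.projection _ hW.symm, fun x => by simp, fun x hx => ?_, ?_, fun x => ?_⟩
    · exact (Submodule.projection_apply_left hW.symm ⟨x, hx⟩)
    · exact (Submodule.projection_apply_eq_zero_iff hW.symm).2 (Submodule.mem_span_singleton_self α)
    · rw [← Submodule.projection_apply_eq_zero_iff hW.symm, map_sub, sub_eq_zero]
      exact (Submodule.projection_apply_left hW.symm ⟨_, Submodule.projection_apply_mem hW.symm x⟩).symm
  have hp6 : p (b 6) = 0 := by
    have : b 6 = (a' 6)⁻¹ • α := by rw [hsum, smul_smul, inv_mul_cancel₀ ha, one_smul]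
    rw [this, map_smul, hpα, smul_zero]
  have hco : ∀ (i : Fin 7), i ≠ 6 → ∀ x, b.coord i (p x) = b.coord i x := by
    intro i hi x
    obtain ⟨c, hc⟩ := Submodule.mem_span_singleton.1 (hpd x)
    have : b.coord i (x - p x) = 0 := by
      rw [← hc, hsum]
      simp [Finsupp.single_apply, hi.symm]
    rw [map_sub, sub_eq_zero] at this
    exact this.symm
  refine ⟨fun i => p (b i.castSucc), fun i => b.coord i.castSucc, ?_, ?_, ?_⟩
  · intro i j
    rw [hco _ (Fin.castSucc_lt_last i).ne]
    simp [Finsupp.single_apply, eq_comm]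
  · apply le_antisymm
    · rw [Submodule.span_le]
      rintro _ ⟨i, rfl⟩
      exact hpW _
    · intro x hx
      have h1 := congrArg p (b.sum_repr x)
      rw [hpf x hx, map_sum, Fin.sum_univ_castSucc, map_smul p _ (b (Fin.last 6))] at h1
      rw [show b (Fin.last 6) = b 6 from rfl, hp6, smul_zero, add_zero] at h1
      rw [← h1]
      refine Submodule.sum_mem _ fun i _ => ?_
      rw [map_smul]
      exact Submodule.smul_mem _ _ (Submodule.subset_span ⟨i, rfl⟩)
  · have h1 := congrArg (ExteriorAlgebra.map p) hdec
    rw [map_add, map_fix p W hpf 4 Ω hΩ, map_mul, ExteriorAlgebra.map_apply_ι, hpα, map_zero,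
      mul_zero, add_zero, ← R.psi, ← funext hb] at h1
    rw [← h1]
    simp only [PsiPlus, wedge4, map_add, map_sub, map_mul, ExteriorAlgebra.map_apply_ι, hp6, map_zero,
      mul_zero, add_zero, sub_zero]
    rfl

theorem final_P (e : Basis (Fin 7) ℝ M) (α : M) (hα : α ≠ 0)
    (W : Submodule ℝ M) (hW : IsCompl (Submodule.span ℝ {α}) W)
    (Ω P : ExteriorAlgebra ℝ M) (hΩ : memPow W 4 Ω) (hP : memPow W 3 P)
    (hdec : PsiPlus (F := ℝ) e = Ω + P * ExteriorAlgebra.ι ℝ α) :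
    ∃ (f : Fin 6 → M) (d : Fin 6 → Module.Dual ℝ M),
      (∀ i j, d i (f j) = if i = j then 1 else 0) ∧ Submodule.span ℝ (Set.range f) = W ∧
      P = P0 f := by
  have hαW : α ∉ W := fun h => hα
    (by simpa using hW.disjoint.le_bot ⟨Submodule.mem_span_singleton_self α, h⟩)
  obtain ⟨u, huα, hu⟩ : ∃ u : Module.Dual ℝ M, u α = 1 ∧ ∀ x ∈ W, u x = 0 := by
    obtain ⟨g, hg, hk⟩ := Submodule.exists_le_ker_of_notMem hαW
    refine ⟨(g α)⁻¹ • g, by simp [hg], fun x hx => ?_⟩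
    have : g x = 0 := hk hx
    simp [this]
  have hker : ∀ x, u x = 0 → x ∈ W := by
    intro x hx
    have : x ∈ Submodule.span ℝ {α} ⊔ W := by rw [hW.sup_eq_top]; trivial
    obtain ⟨y, hy, w, hw, rfl⟩ := Submodule.mem_sup.1 this
    obtain ⟨t, rfl⟩ := Submodule.mem_span_singleton.1 hy
    have : t = 0 := by simpa [huα, hu w hw] using hx
    simpa [this] using hw
  obtain ⟨e', a', R, hz⟩ := transitive e (fun i => u (e i))
  obtain ⟨b, hb⟩ := exists_coords e e' R.sp
  have hev : ∀ i, u (b i) = a' i := fun i => hb i ▸ R.ev u (fun _ => rfl) i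
  have hub : ∀ i, i ≠ 6 → u (b i) = 0 := fun i hi => (hev i).trans (hz i hi)
  have hc : u (b 6) ≠ 0 := by
    intro h
    have : u = 0 := b.ext fun i => by
      by_cases hi : i = 6
      · subst hi; simpa using h
      · simpa using hub i hi
    simp [this] at huα
  have hPu : cD u (PsiPlus (F := ℝ) b) = P := by
    have h1 := congrArg (cD u) hdec
    rw [map_add, cD_kill u W hu 4 Ω hΩ, cD_mul, cD_kill u W hu 3 P hP, huα, zero_mul, sub_zero,
      one_smul, zero_add] at h1
    rw [← h1, ← R.psi, ← funext hb]
  obtain ⟨c, hcc⟩ : ∃ c, u (b 6) = c := ⟨_, rfl⟩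
  rw [hcc] at hc
  refine ⟨![c • b 0, c • b 1, b 2, b 3, b 4, b 5], ![c⁻¹ • b.coord 0, c⁻¹ • b.coord 1, b.coord 2,
    b.coord 3, b.coord 4, b.coord 5], ?_, ?_, ?_⟩
  · intro i j
    fin_cases i <;> fin_cases j <;> simp [Finsupp.single_apply, hc]
  · have hbW : ∀ i, i ≠ 6 → b i ∈ W := fun i hi => hker _ (hub i hi)
    apply le_antisymm
    · rw [Submodule.span_le]
      rintro _ ⟨i, rfl⟩
      fin_cases i
      · exact W.smul_mem _ (hbW _ (by decide))
      · exact W.smul_mem _ (hbW _ (by decide))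
      · exact (hbW _ (by decide))
      · exact (hbW _ (by decide))
      · exact (hbW _ (by decide))
      · exact (hbW _ (by decide))
    · intro x hx
      have h1 := b.sum_repr x
      have h2 := congrArg u h1
      rw [map_sum, Finset.sum_eq_single 6 (fun i _ hi => by rw [map_smul, hub i hi, smul_zero])
        (by simp), hu x hx, map_smul, hcc, smul_eq_mul] at h2
      have h3 : b.repr x 6 = 0 := (mul_eq_zero.1 h2).resolve_right hc
      rw [Submodule.mem_span_range_iff_exists_fun]
      refine ⟨![b.repr x 0 * c⁻¹, b.repr x 1 * c⁻¹, b.repr x 2, b.repr x 3, b.repr x 4, b.repr x 5], ?_⟩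
      rw [Fin.sum_univ_castSucc] at h1
      rw [show Fin.last 6 = 6 from rfl, h3, zero_smul, add_zero] at h1
      refine Eq.trans ?_ h1
      simp [Fin.sum_univ_succ, smul_smul, hc]
  · have h0 := hub 0 (by decide)
    have h1 := hub 1 (by decide)
    have h2 := hub 2 (by decide)
    have h3 := hub 3 (by decide)
    have h4 := hub 4 (by decide)
    have h5 := hub 5 (by decide)
    rw [← hPu]
    simp [PsiPlus, wedge4, P0, cD_mul, cD_ι, h0, h1, h2, h3, h4, h5, hcc]
    try abel

end Final

theorem stmt9 {V : Type*} [AddCommGroup V] [Module ℝ V] [FiniteDimensional ℝ V]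
    (hV : finrank ℝ V = 7)
    (Ψ : ExteriorAlgebra ℝ (Module.Dual ℝ V))
    (hΨ : ∃ e : Basis (Fin 7) ℝ (Module.Dual ℝ V), Ψ = PsiPlus (F := ℝ) (⇑e))
    (α : Module.Dual ℝ V) (hα : α ≠ 0)
    (W : Submodule ℝ (Module.Dual ℝ V)) (hW : IsCompl (Submodule.span ℝ {α}) W)
    (Ω P : ExteriorAlgebra ℝ (Module.Dual ℝ V))
    (hΩ : memPow W 4 Ω) (hP : memPow W 3 P)
    (hdec : Ψ = Ω + P * ExteriorAlgebra.ι ℝ α) :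
    (rkInv (F := ℝ) 4 Ω = 6 ∧ len W 4 Ω = 3 ∧ mInv W 4 Ω = 2 ∧ rInv W 4 Ω = 1) ∧
      (rkInv (F := ℝ) 3 P = 6 ∧ len W 3 P = 3 ∧ mInv W 3 P = 2 ∧ rInv W 3 P = 2) := by
  obtain ⟨e, rfl⟩ := hΨ
  constructor
  · obtain ⟨f, d, hd, hs, rfl⟩ := final_Om e α hα W hW Ω P hΩ hdec
    exact coreOm f d hd W hs
  · obtain ⟨f, d, hd, hs, rfl⟩ := final_P e α hα W hW Ω P hΩ hP hdec
    exact coreP f d hd W hs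
end

section
/- Let V be a six-dimensional vector space over F ∈ {ℝ,ℂ}, let ω ∈ Λ²V* satisfy ω∧ω∧ω ≠ 0 (i.e. ω is nondegenerate), and set Ω := (1/2)·ω∧ω ∈ Λ⁴V*. Then: (i) {f ∈ GL(V) : f*Ω = Ω} = {f ∈ GL(V) : f*ω = ω or f*ω = −ω}, i.e. the stabilizer of Ω under the natural action of GL(V) on Λ⁴V* consists exactly of the symplectic and the anti-symplectic transformations of (V,ω); (ii) {f ∈ End(V) : Σ_{i=1}^4 Ω(v₁,…,f(v_i),…,v₄) = 0 for all v₁,…,v₄ ∈ V} = sp(V,ω). -/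
open Module

/-- The four-form `Ω := (1/2) ω ∧ ω`, evaluated on `(a,b,c,d)`:
`Ω(a,b,c,d) = ω(a,b)ω(c,d) - ω(a,c)ω(b,d) + ω(a,d)ω(b,c)`. -/
def halfSq {F : Type*} [Field F] {V : Type*} [AddCommGroup V] [Module F V]
    (ω : V →ₗ[F] V →ₗ[F] F) (a b c d : V) : F :=
  ω a b * ω c d - ω a c * ω b d + ω a d * ω b c


theorem aux_dim {F : Type*} [Field F] {V : Type*} [AddCommGroup V] [Module F V]
    [FiniteDimensional F V] (hV : finrank F V = 6)
    (B : V →ₗ[F] V →ₗ[F] F) (hnd : ∀ v : V, (∀ w : V, B v w = 0) → v = 0)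
    (φ ψ : V →ₗ[F] F) : ∃ a b : V, φ a = 0 ∧ ψ a = 0 ∧ φ b = 0 ∧ ψ b = 0 ∧ B a b ≠ 0 := by
  by_contra hcon
  push Not at hcon
  let K : Submodule F V := LinearMap.ker (φ.prod ψ)
  have hK : ∀ x, x ∈ K ↔ φ x = 0 ∧ ψ x = 0 := by
    intro x
    simp [K, LinearMap.mem_ker]
  have h1 := LinearMap.finrank_range_add_finrank_ker (φ.prod ψ)
  have h2 : finrank F (LinearMap.range (φ.prod ψ)) ≤ 2 := by
    refine (Submodule.finrank_le _).trans ?_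
    simp
  have hinj : Function.Injective B := by
    rw [injective_iff_map_eq_zero]
    intro a ha
    exact hnd a (fun w => by rw [ha]; rfl)
  have h3 : K.map B ≤ K.dualAnnihilator := by
    rintro _ ⟨a, ha, rfl⟩
    rw [Submodule.mem_dualAnnihilator]
    intro b hb
    have ha' := (hK a).1 ha
    have hb' := (hK b).1 hb
    exact hcon a b ha'.1 ha'.2 hb'.1 hb'.2
  have h4 : finrank F (K.map B) ≤ finrank F K.dualAnnihilator := Submodule.finrank_mono h3
  have h5 : finrank F (K.map B) = finrank F K := 
    (Submodule.equivMapOfInjective B hinj K).finrank_eq.symm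
  have h6 : finrank F K + finrank F K.dualAnnihilator = finrank F V :=
    Subspace.finrank_add_finrank_dualAnnihilator_eq K
  change _ + finrank F K = _ at h1
  omega

theorem aux_prop {F : Type*} [Field F] {V : Type*} [AddCommGroup V] [Module F V]
    (ω η : V →ₗ[F] V →ₗ[F] F)
    (h : ∀ v c : V, ω v c = 0 → η v c = 0) (a b x y : V) :
    η a b * ω x y = ω a b * η x y := by
  have h1 : ∀ v c d, η v c * ω v d = ω v c * η v d := by
    intro v c d
    have := h v (ω v d • c - ω v c • d) (by simp; ring)
    simp at this
    linear_combination this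
  have h2 : ∀ u v c, η u c * ω v c = ω u c * η v c := by
    intro u v c
    have := h (ω v c • u - ω u c • v) c (by simp; ring)
    simp at this
    linear_combination this
  by_cases hay : ω a y = 0
  · by_cases hxb : ω x b = 0
    · have := h1 (a + x) b y
      simpa [hay, hxb, h _ _ hay, h _ _ hxb] using this
    · apply mul_left_cancel₀ hxb
      linear_combination ω x y * h2 a x b + ω a b * h1 x b y
  · apply mul_left_cancel₀ hay
    linear_combination ω x y * h1 a b y + ω a b * h2 a x y

theorem aux_nz {F : Type*} [Field F] {V : Type*} [AddCommGroup V] [Module F V]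
    [FiniteDimensional F V] (hV : finrank F V = 6)
    (ω : V →ₗ[F] V →ₗ[F] F) (hnd : ∀ v : V, (∀ w : V, ω v w = 0) → v = 0) :
    ∃ x y a b, ω x y ≠ 0 ∧ halfSq ω x y a b ≠ 0 := by
  obtain ⟨x, y, -, -, -, -, hxy⟩ := aux_dim hV ω hnd 0 0
  obtain ⟨a, b, h1, h2, h3, h4, hab⟩ := aux_dim hV ω hnd (ω x) (ω y)
  refine ⟨x, y, a, b, hxy, ?_⟩
  simp [halfSq, h1, h2, h3, h4, hxy, hab]

/-- Let `V` be a six-dimensional vector space over `F ∈ {ℝ,ℂ}`, let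
`ω ∈ Λ²V*` be nondegenerate (equivalently `ω ∧ ω ∧ ω ≠ 0`), and set
`Ω := (1/2) ω ∧ ω ∈ Λ⁴V*`.  Then:
(i)  the stabilizer of `Ω` in `GL(V)` consists exactly of the symplectic and the
     anti-symplectic transformations of `(V, ω)`, i.e. `f*Ω = Ω ↔ (f*ω = ω ∨ f*ω = -ω)`;
(ii) `{f ∈ End(V) : ∑ᵢ Ω(v₁,…,f(vᵢ),…,v₄) = 0 for all v₁,…,v₄} = sp(V,ω)`. -/
theorem stmt11 {F : Type*} [RCLike F] {V : Type*} [AddCommGroup V] [Module F V]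
    [FiniteDimensional F V] (hV : finrank F V = 6)
    (ω : V →ₗ[F] V →ₗ[F] F) (halt : ∀ v : V, ω v v = 0)
    (hnd : ∀ v : V, (∀ w : V, ω v w = 0) → v = 0) :
    (∀ f : V ≃ₗ[F] V,
      ((∀ a b c d : V, halfSq ω (f a) (f b) (f c) (f d) = halfSq ω a b c d) ↔
        ((∀ a b : V, ω (f a) (f b) = ω a b) ∨ (∀ a b : V, ω (f a) (f b) = -ω a b)))) ∧
    ({f : V →ₗ[F] V |
        ∀ a b c d : V,
          halfSq ω (f a) b c d + halfSq ω a (f b) c d + halfSq ω a b (f c) d +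
            halfSq ω a b c (f d) = 0} =
      {f : V →ₗ[F] V | ∀ v w : V, ω (f v) w + ω v (f w) = 0}) := by
  have hsk : ∀ a b, ω a b = - ω b a := by
    intro a b
    have := halt (a + b)
    simp [halt] at this
    linear_combination this
  obtain ⟨x, y, p, q, hxy, hpq⟩ := aux_nz hV ω hnd
  refine ⟨fun f => ⟨fun hf => ?_, fun hf => ?_⟩, ?_⟩
  · let β : V →ₗ[F] V →ₗ[F] F := ω.compl₁₂ (f : V →ₗ[F] V) (f : V →ₗ[F] V)
    have hβ : ∀ a b, β a b = ω (f a) (f b) := fun a b => rfl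
    have hβnd : ∀ v : V, (∀ w : V, β v w = 0) → v = 0 := by
      intro v hv
      have : f v = 0 := hnd _ (fun w => by simpa [hβ] using hv (f.symm w))
      simpa using this
    have hf' : ∀ a b c d, halfSq β a b c d = halfSq ω a b c d := hf
    have key : ∀ v c, ω v c = 0 → β v c = 0 := by
      intro v c hvc
      by_contra hne
      obtain ⟨a, b, h1, h2, h3, h4, hab⟩ := aux_dim hV β hβnd (ω v) (β v)
      have := hf' v c a b
      simp [halfSq, h1, h2, h3, h4, hvc, hne, hab] at this
    set l := β x y / ω x y with hl
    have hlam : ∀ a b, β a b = l * ω a b := by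
      intro a b
      have := aux_prop ω β key a b x y
      rw [hl]
      field_simp
      linear_combination this
    have hl2 : (l - 1) * (l + 1) = 0 := by
      apply mul_right_cancel₀ hpq
      have := hf' x y p q
      simp only [halfSq, hlam] at this ⊢
      linear_combination this
    rcases mul_eq_zero.1 hl2 with h | h
    · left
      intro a b
      rw [← hβ, hlam]
      linear_combination ω a b * h
    · right
      intro a b
      rw [← hβ, hlam]
      linear_combination ω a b * h
  · intro a b c d
    rcases hf with hf | hf <;> simp [halfSq, hf]
  · ext f
    simp only [Set.mem_ofPred_eq]
    constructor
    · intro hf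
      let η : V →ₗ[F] V →ₗ[F] F := ω.compl₁₂ f LinearMap.id + ω.compl₁₂ LinearMap.id f
      have hη : ∀ a b, η a b = ω (f a) b + ω a (f b) := fun a b => rfl
      have hf' : ∀ a b c d, η a b * ω c d + ω a b * η c d - η a c * ω b d - ω a c * η b d
          + η a d * ω b c + ω a d * η b c = 0 := by
        intro a b c d
        have := hf a b c d
        simp only [halfSq] at this
        simp only [hη]
        linear_combination this
      have key : ∀ v c, ω v c = 0 → η v c = 0 := by
        intro v c hvc
        by_contra hne
        obtain ⟨a, b, h1, h2, h3, h4, hab⟩ := aux_dim hV ω hnd (ω v) (η v)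
        have := hf' v c a b
        simp [h1, h2, h3, h4, hvc, hne, hab] at this
      set l := η x y / ω x y with hl
      have hlam : ∀ a b, η a b = l * ω a b := by
        intro a b
        have := aux_prop ω η key a b x y
        rw [hl]
        field_simp
        linear_combination this
      have hl0 : l = 0 := by
        have h2 : (2 : F) ≠ 0 := two_ne_zero
        apply mul_right_cancel₀ hpq
        apply mul_left_cancel₀ h2
        have := hf' x y p q
        simp only [halfSq, hlam] at this ⊢
        linear_combination this
      intro v w
      rw [← hη, hlam, hl0, zero_mul]
    · intro hf a b c d
      simp only [halfSq]
      linear_combination hf a b * ω c d + ω a b * hf c d - hf a c * ω b d - ω a c * hf b d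
          + hf a d * ω b c + ω a d * hf b c
end

section
/- Let V be a six-dimensional vector space over F ∈ {ℝ,ℂ} and let Ω ∈ Λ⁴V* be a four-form of length 2. Define V₄ := {v ∈ V : for all w ∈ V, ((w∧v) ⌟ Ω)∧((w∧v) ⌟ Ω) = 0}. Then: (i) V₄ is a four-dimensional subspace of V; (ii) there exists a two-dimensional complement V₂ of V₄ in V such that Ω = ω₂∧ω₄ with ω₂ ∈ Λ²Ann(V₄) nonzero decomposable and ω₄ ∈ Λ²Ann(V₂) of length two, where ω₄ is regarded as a nondegenerate two-form on V₄ via the identification Ann(V₂) ≅ V₄* induced by V = V₂ ⊕ V₄; (iii) the set {f ∈ End(V) : Σ_{i=1}^4 Ω(v₁,…,f(v_i),…,v₄) = 0 for all v₁,…,v₄ ∈ V} equals {f ∈ End(V) : f(V₄) ⊆ V₄, pr_{V₄}∘f|_{V₄} = −(tr(f₂)/2)·id_{V₄} + f₄ with f₄ ∈ sp(V₄,ω₄), where f₂ := pr_{V₂}∘f|_{V₂}}. -/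
open Module

section AltMachinery

variable {F : Type*} [Field F] {V : Type*} [AddCommGroup V] [Module F V]

/-- The wedge `φ₁ ∧ … ∧ φ_m` of `m` covectors, as an alternating `m`-form on `V`:
`(φ₁ ∧ … ∧ φ_m)(v₁,…,v_m) = det (φ_i (v_j))`. -/
noncomputable def wedgeCov (m : ℕ) (φ : Fin m → Module.Dual F V) :
    V [⋀^Fin m]→ₗ[F] F :=
  (Matrix.detRowAlternating : (Fin m → F) [⋀^Fin m]→ₗ[F] F).compLinearMap
    (LinearMap.pi φ)

/-- A decomposable alternating `m`-form: a wedge of `m` covectors. -/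
def AltDec (m : ℕ) (X : V [⋀^Fin m]→ₗ[F] F) : Prop :=
  ∃ φ : Fin m → Module.Dual F V, X = wedgeCov m φ

/-- The `m`-form `X` is a sum of `l` decomposable `m`-forms. -/
def AltLenLE (m l : ℕ) (X : V [⋀^Fin m]→ₗ[F] F) : Prop :=
  ∃ Y : Fin l → (V [⋀^Fin m]→ₗ[F] F), (∀ i, AltDec m (Y i)) ∧ X = ∑ i, Y i

/-- The `m`-form `X` has length `l`: it is a sum of `l` decomposable `m`-forms and of no
smaller number of them. -/
def AltHasLen (m l : ℕ) (X : V [⋀^Fin m]→ₗ[F] F) : Prop :=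
  AltLenLE m l X ∧ ∀ j < l, ¬ AltLenLE m j X

end AltMachinery

theorem wedgeCov_apply {F : Type*} [Field F] {V : Type*} [AddCommGroup V] [Module F V] (m : ℕ)
    (φ : Fin m → Module.Dual F V) (v : Fin m → V) :
    wedgeCov m φ v = Matrix.det (Matrix.of fun i j => φ j (v i)) := rfl

theorem wedgeCov_of_span {F : Type*} [Field F] {V : Type*} [AddCommGroup V] [Module F V] (m : ℕ)
    (φ u : Fin m → Module.Dual F V) (h : ∀ i, φ i ∈ Submodule.span F (Set.range u)) :
    ∃ c : F, wedgeCov m φ = c • wedgeCov m u := by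
  have h2 : ∀ i, ∃ c : Fin m → F, ∑ j, c j • u j = φ i := fun i =>
    (Submodule.mem_span_range_iff_exists_fun F).1 (h i)
  choose M hM using h2
  refine ⟨(Matrix.of M).det, ?_⟩
  ext v
  rw [AlternatingMap.smul_apply, wedgeCov_apply, wedgeCov_apply, smul_eq_mul,
    ← Matrix.det_transpose (Matrix.of M), mul_comm, ← Matrix.det_mul]
  congr 1
  ext i j
  simp [Matrix.mul_apply, ← hM, mul_comm]

theorem wedgeCov_dep {F : Type*} [Field F] {V : Type*} [AddCommGroup V] [Module F V] (m : ℕ)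
    (φ : Fin m → Module.Dual F V) (h : ¬ LinearIndependent F φ) : wedgeCov m φ = 0 := by
  rw [Fintype.not_linearIndependent_iff] at h
  obtain ⟨g, hg, i, hi⟩ := h
  ext v
  rw [wedgeCov_apply, AlternatingMap.zero_apply, ← Matrix.exists_mulVec_eq_zero_iff]
  refine ⟨g, fun h => hi (by simp [h]), ?_⟩
  ext k
  have := congrArg (fun f => f (v k)) hg
  simpa [Matrix.mulVec, dotProduct, mul_comm] using this

theorem ext_basis {F : Type*} [Field F] {W : Type*} [AddCommGroup W] [Module F W]
    [FiniteDimensional F W] (A : Submodule F W) (k n : ℕ) (hn : finrank F A = k + n) 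
    (u : Fin k → W) (hu : LinearIndependent F u) (hA : ∀ i, u i ∈ A) :
    ∃ w : Fin n → W, Submodule.span F (Set.range (Fin.append u w)) = A ∧
      LinearIndependent F (Fin.append u w) := by
  have key : ∀ m, m ≤ n → ∃ w : Fin m → W, (∀ i, w i ∈ A) ∧
      LinearIndependent F (Fin.append u w) := by
    intro m
    induction m with
    | zero =>
      intro _
      refine ⟨Fin.elim0, fun i => i.elim0, ?_⟩
      rw [Fin.append_elim0]
      simpa using hu
    | succ m ih =>
      intro hm
      obtain ⟨w, hw, hl⟩ := ih (by omega)
      have hall : ∀ i, Fin.append u w i ∈ A := by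
        intro i
        refine Fin.addCases (fun i => ?_) (fun i => ?_) i
        · simpa using hA i
        · simpa using hw i
      let q : Fin (k + m) → A := fun i => ⟨_, hall i⟩
      have hq : LinearIndependent F q := by
        apply LinearIndependent.of_comp A.subtype
        exact hl
      obtain ⟨x, hx⟩ := exists_linearIndependent_snoc_of_lt_finrank hq (by omega)
      refine ⟨Fin.snoc w x, ?_, ?_⟩
      · intro i
        refine Fin.lastCases ?_ (fun i => ?_) i
        · simp
        · simpa using hw i
      · have h3 := hx.map' A.subtype (Submodule.ker_subtype A)
        have : Fin.append u (Fin.snoc w (x : W) : Fin (m+1) → W) = A.subtype ∘ (Fin.snoc q x : Fin (k+m+1) → A) := by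
          rw [Fin.append_snoc]
          ext i
          refine Fin.lastCases ?_ (fun i => ?_) i
          · simp
          · simp [q]
        rw [this]
        exact h3
  obtain ⟨w, hw, hl⟩ := key n le_rfl
  refine ⟨w, ?_, hl⟩
  apply Submodule.eq_of_le_of_finrank_eq
  · rw [Submodule.span_le]
    rintro _ ⟨i, rfl⟩
    refine Fin.addCases (fun i => ?_) (fun i => ?_) i
    · simpa using hA i
    · simpa using hw i
  · rw [finrank_span_eq_card hl, hn]; simp

theorem exists_li {F : Type*} [Field F] {W : Type*} [AddCommGroup W] [Module F W]
    [FiniteDimensional F W] (A : Submodule F W) (k : ℕ) (hk : k ≤ finrank F A) :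
    ∃ u : Fin k → W, LinearIndependent F u ∧ ∀ i, u i ∈ A := by
  obtain ⟨f, hf⟩ := exists_linearIndependent_of_le_finrank hk
  exact ⟨fun i => f i, hf.map' A.subtype (Submodule.ker_subtype A), fun i => (f i).2⟩

theorem det4 {F : Type*} [Field F] (M : Matrix (Fin 4) (Fin 4) F) : M.det =
    (M 0 0 * M 1 1 - M 1 0 * M 0 1) * (M 2 2 * M 3 3 - M 3 2 * M 2 3)
    - (M 0 0 * M 2 1 - M 2 0 * M 0 1) * (M 1 2 * M 3 3 - M 3 2 * M 1 3)
    + (M 0 0 * M 3 1 - M 3 0 * M 0 1) * (M 1 2 * M 2 3 - M 2 2 * M 1 3)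
    + (M 1 0 * M 2 1 - M 2 0 * M 1 1) * (M 0 2 * M 3 3 - M 3 2 * M 0 3)
    - (M 1 0 * M 3 1 - M 3 0 * M 1 1) * (M 0 2 * M 2 3 - M 2 2 * M 0 3)
    + (M 2 0 * M 3 1 - M 3 0 * M 2 1) * (M 0 2 * M 1 3 - M 1 2 * M 0 3) := by
  simp [Matrix.det_succ_row_zero, Fin.sum_univ_succ, Fin.succAbove]
  ring

theorem wedge4_s12 {F : Type*} [Field F] {V : Type*} [AddCommGroup V] [Module F V]
    (φ : Fin 4 → Module.Dual F V) (a b c d : V) : wedgeCov 4 φ ![a, b, c, d] =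
    (φ 0 a * φ 1 b - φ 0 b * φ 1 a) * (φ 2 c * φ 3 d - φ 2 d * φ 3 c)
    - (φ 0 a * φ 1 c - φ 0 c * φ 1 a) * (φ 2 b * φ 3 d - φ 2 d * φ 3 b)
    + (φ 0 a * φ 1 d - φ 0 d * φ 1 a) * (φ 2 b * φ 3 c - φ 2 c * φ 3 b)
    + (φ 0 b * φ 1 c - φ 0 c * φ 1 b) * (φ 2 a * φ 3 d - φ 2 d * φ 3 a)
    - (φ 0 b * φ 1 d - φ 0 d * φ 1 b) * (φ 2 a * φ 3 c - φ 2 c * φ 3 a)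
    + (φ 0 c * φ 1 d - φ 0 d * φ 1 c) * (φ 2 a * φ 3 b - φ 2 b * φ 3 a) := by
  rw [wedgeCov_apply, det4]
  simp

theorem normal_form {F : Type*} [Field F] {V : Type*} [AddCommGroup V] [Module F V]
    [FiniteDimensional F V] (hV : finrank F V = 6)
    (Ω : V [⋀^Fin 4]→ₗ[F] F) (hΩ : AltHasLen 4 2 Ω) :
    ∃ e : Basis (Fin 6) F V, ∃ ω₂ ω₄ : V → V → F,
      (ω₂ = fun x y => e.coord 0 x * e.coord 1 y - e.coord 0 y * e.coord 1 x) ∧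
      (ω₄ = fun x y => (e.coord 2 x * e.coord 3 y - e.coord 2 y * e.coord 3 x) +
        (e.coord 4 x * e.coord 5 y - e.coord 4 y * e.coord 5 x)) ∧
      (∀ a b c d : V,
            Ω ![a, b, c, d] =
              ω₂ a b * ω₄ c d - ω₂ a c * ω₄ b d + ω₂ a d * ω₄ b c +
                ω₂ b c * ω₄ a d - ω₂ b d * ω₄ a c + ω₂ c d * ω₄ a b) := by
  obtain ⟨⟨Y, hY, hsum⟩, hlen⟩ := hΩ
  have hno : ¬ AltDec 4 Ω := fun h => hlen 1 (by norm_num) ⟨fun _ => Ω, fun _ => h, by simp⟩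
  rw [Fin.sum_univ_two] at hsum
  obtain ⟨φ, hφ⟩ := hY 0
  obtain ⟨ψ, hψ⟩ := hY 1
  rw [hφ, hψ] at hsum
  have lφ : LinearIndependent F φ := by
    by_contra h
    exact hno ⟨ψ, by rw [hsum, wedgeCov_dep _ _ h, zero_add]⟩
  have lψ : LinearIndependent F ψ := by
    by_contra h
    exact hno ⟨φ, by rw [hsum, wedgeCov_dep _ _ h, add_zero]⟩
  set A := Submodule.span F (Set.range φ) with hA
  set B := Submodule.span F (Set.range ψ) with hB
  have dA : finrank F A = 4 := by rw [hA, finrank_span_eq_card lφ]; simp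
  have dB : finrank F B = 4 := by rw [hB, finrank_span_eq_card lψ]; simp
  have dAB := Submodule.finrank_sup_add_finrank_inf_eq A B
  have dV : finrank F (Module.Dual F V) = 6 := by rw [Subspace.dual_finrank_eq, hV]
  have dle : finrank F ↥(A ⊔ B) ≤ 6 := dV ▸ Submodule.finrank_le _
  by_cases h3 : 3 ≤ finrank F ↥(A ⊓ B)
  · exfalso
    obtain ⟨u, hu, hm⟩ := exists_li _ 3 h3
    obtain ⟨w, hw, -⟩ := ext_basis A 3 1 dA u hu (fun i => (hm i).1)
    obtain ⟨z, hz, -⟩ := ext_basis B 3 1 dB u hu (fun i => (hm i).2)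
    obtain ⟨c, hc⟩ := wedgeCov_of_span 4 φ (Fin.append u w)
      (fun i => by rw [hw]; exact Submodule.subset_span ⟨i, rfl⟩)
    obtain ⟨d, hd⟩ := wedgeCov_of_span 4 ψ (Fin.append u z)
      (fun i => by rw [hz]; exact Submodule.subset_span ⟨i, rfl⟩)
    apply hno
    refine ⟨![u 0, u 1, u 2, c • w 0 + d • z 0], ?_⟩
    rw [hsum, hc, hd]
    ext v
    have e0 : ∀ w : Fin 1 → Module.Dual F V, Fin.append u w = ![u 0, u 1, u 2, w 0] := by
      intro w; ext i; fin_cases i <;> rfl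
    have ev : v = ![v 0, v 1, v 2, v 3] := by ext i; fin_cases i <;> rfl
    rw [ev, AlternatingMap.add_apply, AlternatingMap.smul_apply, AlternatingMap.smul_apply,
      wedge4_s12, wedge4_s12, wedge4_s12, e0, e0]
    simp
    ring
  · obtain ⟨u, hu, hm⟩ := exists_li (A ⊓ B) 2 (by omega)
    obtain ⟨w, hw, -⟩ := ext_basis A 2 2 dA u hu (fun i => (hm i).1)
    obtain ⟨z, hz, -⟩ := ext_basis B 2 2 dB u hu (fun i => (hm i).2)
    obtain ⟨c, hc⟩ := wedgeCov_of_span 4 φ (Fin.append u w)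
      (fun i => by rw [hw]; exact Submodule.subset_span ⟨i, rfl⟩)
    obtain ⟨d, hd⟩ := wedgeCov_of_span 4 ψ (Fin.append u z)
      (fun i => by rw [hz]; exact Submodule.subset_span ⟨i, rfl⟩)
    have e0 : ∀ w : Fin 2 → Module.Dual F V, Fin.append u w = ![u 0, u 1, w 0, w 1] := by
      intro w; ext i; fin_cases i <;> rfl
    have c0 : c ≠ 0 := by
      rintro rfl
      exact hno ⟨ψ, by rw [hsum, hc, zero_smul, zero_add]⟩
    have d0 : d ≠ 0 := by
      rintro rfl
      exact hno ⟨φ, by rw [hsum, hd, zero_smul, add_zero]⟩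
    let U : Fin 6 → Module.Dual F V := ![u 0, u 1, c • w 0, w 1, d • z 0, z 1]
    have htop : A ⊔ B = ⊤ := by
      apply Submodule.eq_top_of_finrank_eq
      omega
    have hmem : ∀ i, U i ∈ Submodule.span F (Set.range U) := fun i =>
      Submodule.subset_span ⟨i, rfl⟩
    have hsp : ⊤ ≤ Submodule.span F (Set.range U) := by
      rw [← htop, sup_le_iff, ← hw, ← hz, Submodule.span_le, Submodule.span_le, e0, e0]
      constructor
      · rintro _ ⟨i, rfl⟩
        fin_cases i
        · exact hmem 0
        · exact hmem 1
        · have := Submodule.smul_mem _ c⁻¹ (hmem 2)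
          simpa [U, smul_smul, c0] using this
        · exact hmem 3
      · rintro _ ⟨i, rfl⟩
        fin_cases i
        · exact hmem 0
        · exact hmem 1
        · have := Submodule.smul_mem _ d⁻¹ (hmem 4)
          simpa [U, smul_smul, d0] using this
        · exact hmem 5
    have hli : LinearIndependent F U :=
      linearIndependent_of_top_le_span_of_card_eq_finrank hsp (by simp [dV])
    let E : Basis (Fin 6) F (Module.Dual F V) := Basis.mk hli hsp
    let e : Basis (Fin 6) F V := E.dualBasis.map (Module.evalEquiv F V).symm
    have he : ∀ i, e.coord i = U i := by
      intro i
      apply e.ext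
      intro j
      have h1 : U i (e j) = E.dualBasis j (U i) := by
        simp only [e, Basis.map_apply]
        rw [Module.apply_evalEquiv_symm_apply]
      have h2 : U i = E i := by simp [E]
      rw [h1, h2, Basis.dualBasis_apply_self]
      simp [Finsupp.single_apply, eq_comm]
    refine ⟨e, _, _, rfl, rfl, ?_⟩
    intro x y p q
    simp only [he]
    rw [hsum, hc, hd, AlternatingMap.add_apply, AlternatingMap.smul_apply,
      AlternatingMap.smul_apply, wedge4_s12, wedge4_s12, e0, e0]
    simp [U]
    ring

set_option maxHeartbeats 4000000 in
theorem main_part {F : Type*} [RCLike F] {V : Type*} [AddCommGroup V] [Module F V]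
    (Ω : V [⋀^Fin 4]→ₗ[F] F)
    (e : Basis (Fin 6) F V) (ω₂ ω₄ : V → V → F)
    (h2 : ω₂ = fun x y => e.coord 0 x * e.coord 1 y - e.coord 0 y * e.coord 1 x)
    (h4 : ω₄ = fun x y => (e.coord 2 x * e.coord 3 y - e.coord 2 y * e.coord 3 x) +
        (e.coord 4 x * e.coord 5 y - e.coord 4 y * e.coord 5 x))
    (hΩ : ∀ a b c d : V,
            Ω ![a, b, c, d] =
              ω₂ a b * ω₄ c d - ω₂ a c * ω₄ b d + ω₂ a d * ω₄ b c +
                ω₂ b c * ω₄ a d - ω₂ b d * ω₄ a c + ω₂ c d * ω₄ a b) :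
    ∃ V₄ : Submodule F V,
      (V₄ : Set V) = {v : V | ∀ w x y z t : V,
          Ω ![w, v, x, y] * Ω ![w, v, z, t] - Ω ![w, v, x, z] * Ω ![w, v, y, t] +
            Ω ![w, v, x, t] * Ω ![w, v, y, z] = 0} ∧
      finrank F ↥V₄ = 4 ∧
      ∃ V₂ : Submodule F V, ∃ hc : IsCompl V₂ V₄, finrank F ↥V₂ = 2 ∧
          (∃ a b : Module.Dual F V, (∀ x ∈ V₄, a x = 0) ∧ (∀ x ∈ V₄, b x = 0) ∧
            ω₂ = fun x y => a x * b y - a y * b x) ∧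
          ω₂ ≠ 0 ∧
          (∃ c₁ d₁ c₂ d₂ : Module.Dual F V,
            (∀ x ∈ V₂, c₁ x = 0) ∧ (∀ x ∈ V₂, d₁ x = 0) ∧
            (∀ x ∈ V₂, c₂ x = 0) ∧ (∀ x ∈ V₂, d₂ x = 0) ∧
            ω₄ = fun x y =>
              (c₁ x * d₁ y - c₁ y * d₁ x) + (c₂ x * d₂ y - c₂ y * d₂ x)) ∧
          (¬ ∃ c d : Module.Dual F V, ω₄ = fun x y => c x * d y - c y * d x) ∧
          ({f : V →ₗ[F] V |
              ∀ a b c d : V,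
                Ω ![f a, b, c, d] + Ω ![a, f b, c, d] + Ω ![a, b, f c, d] +
                  Ω ![a, b, c, f d] = 0} =
            {f : V →ₗ[F] V |
              (∀ x ∈ V₄, f x ∈ V₄) ∧
              ∃ f₄ : ↥V₄ →ₗ[F] ↥V₄,
                (∀ x y : ↥V₄, ω₄ ↑(f₄ x) ↑y + ω₄ ↑x ↑(f₄ y) = 0) ∧
                ∀ x : ↥V₄,
                  (V₄.linearProjOfIsCompl V₂ hc.symm) (f ↑x) =
                    -((LinearMap.trace F ↥V₂)
                        ((V₂.linearProjOfIsCompl V₄ hc) ∘ₗ f ∘ₗ V₂.subtype) / 2) • x +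
                      f₄ x}) := by
  have k : ∀ i j, e.coord i (e j) = if j = i then 1 else 0 := by
    intro i j; simp [Finsupp.single_apply]
  have k2 : ∀ x y, ω₂ x y = e.coord 0 x * e.coord 1 y - e.coord 0 y * e.coord 1 x := by
    intro x y; rw [h2]
  have k4 : ∀ x y, ω₄ x y = (e.coord 2 x * e.coord 3 y - e.coord 2 y * e.coord 3 x) +
        (e.coord 4 x * e.coord 5 y - e.coord 4 y * e.coord 5 x) := by
    intro x y; rw [h4]
  have hx : ∀ x, x = e.coord 0 x • e 0 + e.coord 1 x • e 1 + e.coord 2 x • e 2 + e.coord 3 x • e 3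
      + e.coord 4 x • e 4 + e.coord 5 x • e 5 := by
    intro x
    conv_lhs => rw [← e.sum_repr x]
    rw [Fin.sum_univ_six]
    rfl
  let V₄ : Submodule F V := LinearMap.ker (e.coord 0) ⊓ LinearMap.ker (e.coord 1)
  let V₂ : Submodule F V := LinearMap.ker (e.coord 2) ⊓ LinearMap.ker (e.coord 3) ⊓
    LinearMap.ker (e.coord 4) ⊓ LinearMap.ker (e.coord 5)
  have m4 : ∀ x, x ∈ V₄ ↔ e.coord 0 x = 0 ∧ e.coord 1 x = 0 := by
    intro x; simp [V₄]
  have m2 : ∀ x, x ∈ V₂ ↔ e.coord 2 x = 0 ∧ e.coord 3 x = 0 ∧ e.coord 4 x = 0 ∧ e.coord 5 x = 0 := by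
    intro x; simp [V₂, and_assoc]
  have me4 : ∀ j : Fin 6, 2 ≤ j → e j ∈ V₄ := by
    intro j hj
    rw [m4, k, k]
    constructor <;> rw [if_neg] <;> rintro rfl <;> revert hj <;> decide
  have me2 : ∀ j : Fin 6, j < 2 → e j ∈ V₂ := by
    intro j hj
    rw [m2, k, k, k, k]
    refine ⟨?_, ?_, ?_, ?_⟩ <;> rw [if_neg] <;> rintro rfl <;> revert hj <;> decide
  let B4 : Basis (Fin 4) F V₄ := Basis.ofEquivFun
    { toFun := fun x => ![e.coord 2 x, e.coord 3 x, e.coord 4 x, e.coord 5 x]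
      map_add' := by intro x y; ext i; fin_cases i <;> simp
      map_smul' := by intro c x; ext i; fin_cases i <;> simp
      invFun := fun g => ⟨g 0 • e 2 + g 1 • e 3 + g 2 • e 4 + g 3 • e 5, by
        refine add_mem (add_mem (add_mem ?_ ?_) ?_) ?_ <;>
        exact Submodule.smul_mem _ _ (me4 _ (by decide))⟩
      left_inv := by
        intro x
        ext
        have h := (m4 _).1 x.2
        have h' := hx x
        rw [h.1, h.2] at h'
        conv_rhs => rw [h']
        simp
      right_inv := by
        intro g
        ext i
        fin_cases i <;> simp }
  let B2 : Basis (Fin 2) F V₂ := Basis.ofEquivFun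
    { toFun := fun x => ![e.coord 0 x, e.coord 1 x]
      map_add' := by intro x y; ext i; fin_cases i <;> simp
      map_smul' := by intro c x; ext i; fin_cases i <;> simp
      invFun := fun g => ⟨g 0 • e 0 + g 1 • e 1, by
        refine add_mem ?_ ?_ <;>
        exact Submodule.smul_mem _ _ (me2 _ (by decide))⟩
      left_inv := by
        intro x
        ext
        have h := (m2 _).1 x.2
        have h' := hx x
        rw [h.1, h.2.1, h.2.2.1, h.2.2.2] at h'
        conv_rhs => rw [h']
        simp
      right_inv := by
        intro g
        ext i
        fin_cases i <;> simp }
  have B20 : (B2 0 : V) = e 0 := by simp [B2]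
  have B21 : (B2 1 : V) = e 1 := by simp [B2]
  have B2r0 : ∀ x, B2.repr x 0 = e.coord 0 x := by intro x; simp [B2]
  have B2r1 : ∀ x, B2.repr x 1 = e.coord 1 x := by intro x; simp [B2]
  have hc : IsCompl V₂ V₄ := by
    constructor
    · rw [Submodule.disjoint_def]
      intro x h1 h2
      rw [m2] at h1
      rw [m4] at h2
      rw [hx x, h1.1, h1.2.1, h1.2.2.1, h1.2.2.2, h2.1, h2.2]
      simp
    · rw [codisjoint_iff, eq_top_iff]
      rintro x -
      rw [hx x]
      have q4 : ∀ j : Fin 6, 2 ≤ j → e j ∈ V₂ ⊔ V₄ := fun j hj =>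
        (le_sup_right : V₄ ≤ V₂ ⊔ V₄) (me4 j hj)
      have q2 : ∀ j : Fin 6, j < 2 → e j ∈ V₂ ⊔ V₄ := fun j hj =>
        (le_sup_left : V₂ ≤ V₂ ⊔ V₄) (me2 j hj)
      refine add_mem (add_mem (add_mem (add_mem (add_mem ?_ ?_) ?_) ?_) ?_) ?_ <;>
        apply Submodule.smul_mem
      · exact q2 _ (by decide)
      · exact q2 _ (by decide)
      · exact q4 _ (by decide)
      · exact q4 _ (by decide)
      · exact q4 _ (by decide)
      · exact q4 _ (by decide)
  have z4 : ∀ x ∈ V₄, e.coord 0 x = 0 ∧ e.coord 1 x = 0 := fun x h => (m4 x).1 h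
  -- projection facts
  have pr4 : ∀ x (h : x ∈ V₄), V₄.linearProjOfIsCompl V₂ hc.symm x = ⟨x, h⟩ := by
    intro x h
    exact Submodule.linearProjOfIsCompl_apply_left hc.symm ⟨x, h⟩
  have pr2 : ∀ x, (e.coord 0) (V₂.linearProjOfIsCompl V₄ hc x : V) = e.coord 0 x ∧
      (e.coord 1) (V₂.linearProjOfIsCompl V₄ hc x : V) = e.coord 1 x := by
    intro x
    have hs : (V₂.linearProjOfIsCompl V₄ hc x : V) + (V₄.linearProjOfIsCompl V₂ hc.symm x : V) = x :=
      Submodule.projection_add_projection_eq_self hc x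
    have hm := z4 _ (V₄.linearProjOfIsCompl V₂ hc.symm x).2
    constructor
    · conv_rhs => rw [← hs]
      rw [map_add, hm.1, add_zero]
    · conv_rhs => rw [← hs]
      rw [map_add, hm.2, add_zero]
  have tr : ∀ f : V →ₗ[F] V, (LinearMap.trace F ↥V₂)
      ((V₂.linearProjOfIsCompl V₄ hc) ∘ₗ f ∘ₗ V₂.subtype) =
      e.coord 0 (f (e 0)) + e.coord 1 (f (e 1)) := by
    intro f
    rw [LinearMap.trace_eq_matrix_trace F B2, Matrix.trace, Fin.sum_univ_two]
    simp only [Matrix.diag, LinearMap.toMatrix_apply, B2r0, B2r1, LinearMap.comp_apply,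
      Submodule.subtype_apply, B20, B21, (pr2 _).1, (pr2 _).2]
  refine ⟨V₄, ?_, ?_, V₂, hc, ?_, ⟨e.coord 0, e.coord 1, fun x h => (z4 x h).1,
    fun x h => (z4 x h).2, h2⟩, ?_, ⟨e.coord 2, e.coord 3, e.coord 4, e.coord 5,
    fun x h => ((m2 x).1 h).1, fun x h => ((m2 x).1 h).2.1, fun x h => ((m2 x).1 h).2.2.1,
    fun x h => ((m2 x).1 h).2.2.2, h4⟩, ?_, ?_⟩
  · ext v
    rw [SetLike.mem_coe, m4, Set.mem_setOf_eq]
    constructor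
    · rintro ⟨h0, h1⟩ w x y z t
      simp only [hΩ, k2, h0, h1]
      ring
    · intro h
      constructor
      · have := h (e 1) (e 2) (e 3) (e 4) (e 5)
        simp only [hΩ, k2, k4, k] at this
        simp at this
        simpa using this
      · have := h (e 0) (e 2) (e 3) (e 4) (e 5)
        simp only [hΩ, k2, k4, k] at this
        simp at this
        simpa using this
  · rw [finrank_eq_card_basis B4]; simp
  · rw [finrank_eq_card_basis B2]; simp
  · intro h
    have := congrFun (congrFun h (e 0)) (e 1)
    rw [k2, k, k, k, k] at this
    simp at this
  · rintro ⟨c, d, h⟩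
    have q : ∀ x y, ω₄ x y = c x * d y - c y * d x := by intro x y; rw [h]
    have pf : ω₄ (e 2) (e 3) * ω₄ (e 4) (e 5) - ω₄ (e 2) (e 4) * ω₄ (e 3) (e 5)
      + ω₄ (e 2) (e 5) * ω₄ (e 3) (e 4) = 0 := by
      simp only [q]; ring
    simp only [k4, k] at pf
    simp at pf
  · ext f
    rw [Set.mem_setOf_eq, Set.mem_setOf_eq, tr f]
    have a4 : ∀ x y z, ω₄ (x + y) z = ω₄ x z + ω₄ y z := by
      intro x y z; simp only [k4, map_add]; ring
    have s4 : ∀ (c : F) x z, ω₄ (c • x) z = c * ω₄ x z := by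
      intro x y z; simp only [k4, map_smul, smul_eq_mul]; ring
    have a4' : ∀ x y z, ω₄ z (x + y) = ω₄ z x + ω₄ z y := by
      intro x y z; simp only [k4, map_add]; ring
    have s4' : ∀ (c : F) x z, ω₄ z (c • x) = c * ω₄ z x := by
      intro x y z; simp only [k4, map_smul, smul_eq_mul]; ring
    have w0 : ∀ y, ω₄ (e 0) y = 0 := by intro y; simp only [k4, k]; simp
    have w1 : ∀ y, ω₄ (e 1) y = 0 := by intro y; simp only [k4, k]; simp
    have w0' : ∀ y, ω₄ y (e 0) = 0 := by intro y; simp only [k4, k]; simp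
    have w1' : ∀ y, ω₄ y (e 1) = 0 := by intro y; simp only [k4, k]; simp
    set T := e.coord 0 (f (e 0)) + e.coord 1 (f (e 1)) with hT
    constructor
    · intro h
      have hpres : ∀ x ∈ V₄, f x ∈ V₄ := by
        have g : ∀ a b c d : V, _ := h
        simp only [hΩ] at g
        have r20 : e.coord 0 (f (e 2)) = 0 := by
          have := g (e 2) (e 1) (e 4) (e 5)
          simp only [k2, k4, k] at this
          simpa using this
        have r21 : e.coord 1 (f (e 2)) = 0 := by
          have := g (e 2) (e 0) (e 4) (e 5)
          simp only [k2, k4, k] at this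
          simpa using this
        have r30 : e.coord 0 (f (e 3)) = 0 := by
          have := g (e 3) (e 1) (e 4) (e 5)
          simp only [k2, k4, k] at this
          simpa using this
        have r31 : e.coord 1 (f (e 3)) = 0 := by
          have := g (e 3) (e 0) (e 4) (e 5)
          simp only [k2, k4, k] at this
          simpa using this
        have r40 : e.coord 0 (f (e 4)) = 0 := by
          have := g (e 4) (e 1) (e 2) (e 3)
          simp only [k2, k4, k] at this
          simpa using this
        have r41 : e.coord 1 (f (e 4)) = 0 := by
          have := g (e 4) (e 0) (e 2) (e 3)
          simp only [k2, k4, k] at this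
          simpa using this
        have r50 : e.coord 0 (f (e 5)) = 0 := by
          have := g (e 5) (e 1) (e 2) (e 3)
          simp only [k2, k4, k] at this
          simpa using this
        have r51 : e.coord 1 (f (e 5)) = 0 := by
          have := g (e 5) (e 0) (e 2) (e 3)
          simp only [k2, k4, k] at this
          simpa using this
        intro x hxx
        have hz := z4 x hxx
        rw [m4, hx x, hz.1, hz.2]
        simp only [map_add, map_smul, r20, r21, r30, r31, r40, r41, r50, r51]
        simp
      refine ⟨hpres, f.restrict hpres + (T / 2) • LinearMap.id, ?_, ?_⟩
      · rintro ⟨x, hx1⟩ ⟨y, hy1⟩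
        have := h (e 0) (e 1) x y
        simp only [hΩ, k2, k, (z4 _ hx1).1, (z4 _ hx1).2, (z4 _ hy1).1, (z4 _ hy1).2,
          (z4 _ (hpres _ hx1)).1, (z4 _ (hpres _ hx1)).2,
          (z4 _ (hpres _ hy1)).1, (z4 _ (hpres _ hy1)).2] at this
        simp only [LinearMap.add_apply, LinearMap.smul_apply, LinearMap.id_apply,
          Submodule.coe_add, Submodule.coe_smul, LinearMap.restrict_coe_apply, a4, a4', s4, s4']
        norm_num at this
        simp only [hT, Basis.coord_apply]
        linear_combination this
      · rintro ⟨x, hx1⟩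
        rw [pr4 _ (hpres x hx1)]
        ext
        simp
    · rintro ⟨hpres, f₄, hs, hf⟩
      have hf' : ∀ x (h : x ∈ V₄), f x = -(T / 2) • x + f₄ ⟨x, h⟩ := by
        intro x h
        have := congrArg Subtype.val (hf ⟨x, h⟩)
        rw [pr4 _ (hpres x h)] at this
        simpa using this
      have hD : ∀ x ∈ V₄, ∀ y ∈ V₄, ω₄ (f x) y + ω₄ x (f y) = - T * ω₄ x y := by
        intro x h y h'
        have := hs ⟨x, h⟩ ⟨y, h'⟩
        rw [hf' x h, hf' y h', a4, a4', s4, s4']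
        linear_combination this
      -- decomposition
      let p : V → V := fun x => x - e.coord 0 x • e 0 - e.coord 1 x • e 1
      have hp : ∀ x, p x ∈ V₄ := by
        intro x
        rw [m4]
        simp only [p, map_sub, map_smul, k]
        simp
      have hxp : ∀ x, x = e.coord 0 x • e 0 + e.coord 1 x • e 1 + p x := by
        intro x; simp only [p]; abel
      have f0 : ∀ x, e.coord 0 (f x) = e.coord 0 x * e.coord 0 (f (e 0))
          + e.coord 1 x * e.coord 0 (f (e 1)) := by
        intro x
        conv_lhs => rw [hxp x]
        simp only [map_add, map_smul, (z4 _ (hpres _ (hp x))).1, smul_eq_mul, add_zero]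
      have f1 : ∀ x, e.coord 1 (f x) = e.coord 0 x * e.coord 1 (f (e 0))
          + e.coord 1 x * e.coord 1 (f (e 1)) := by
        intro x
        conv_lhs => rw [hxp x]
        simp only [map_add, map_smul, (z4 _ (hpres _ (hp x))).2, smul_eq_mul, add_zero]
      have an : ∀ x y, ω₄ x y = - ω₄ y x := by intro x y; simp only [k4]; ring
      have ex : ∃ g0 g1 : V → F, ∃ C : F, ∀ x y, ω₄ (f x) y + ω₄ x (f y) = - T * ω₄ x y
          + e.coord 0 x * g0 y - e.coord 0 y * g0 x + e.coord 1 x * g1 y - e.coord 1 y * g1 x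
          + C * (e.coord 0 x * e.coord 1 y - e.coord 0 y * e.coord 1 x) := by
        refine ⟨fun y => ω₄ (f (e 0)) (p y), fun y => ω₄ (f (e 1)) (p y),
          ω₄ (f (e 0)) (e 1) + ω₄ (e 0) (f (e 1)), ?_⟩
        intro x y
        have := hD _ (hp x) _ (hp y)
        have ee : ω₄ x y = ω₄ (p x) (p y) := by
          conv_lhs => rw [hxp x, hxp y]
          simp only [a4, a4', s4, s4', w0, w1, w0', w1']
          ring
        rw [ee]
        have e1 : ω₄ (f x) y + ω₄ x (f y) = e.coord 0 x * ω₄ (f (e 0)) (p y) +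
          e.coord 1 x * ω₄ (f (e 1)) (p y) + ω₄ (f (p x)) (p y)
          + e.coord 0 y * ω₄ (p x) (f (e 0)) +
          e.coord 1 y * ω₄ (p x) (f (e 1)) + ω₄ (p x) (f (p y)) := by
          conv_lhs => rw [hxp x, hxp y]
          simp only [map_add, map_smul, a4, a4', s4, s4', w0, w1, w0', w1']
          ring
        rw [e1, an (p x) (f (e 0)), an (p x) (f (e 1)), w1', w0]
        linear_combination this
      obtain ⟨g0, g1, C, hg⟩ := ex
      obtain ⟨p00, p01, p10, p11, hTp, f0', f1'⟩ : ∃ p00 p01 p10 p11 : F, T = p00 + p11 ∧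
          (∀ x, e.coord 0 (f x) = e.coord 0 x * p00 + e.coord 1 x * p01) ∧
          (∀ x, e.coord 1 (f x) = e.coord 0 x * p10 + e.coord 1 x * p11) :=
        ⟨_, _, _, _, hT, f0, f1⟩
      intro a b c d
      rw [hTp] at hg
      simp only [hΩ, k2, f0', f1']
      linear_combination (e.coord 0 a * e.coord 1 b - e.coord 0 b * e.coord 1 a) * hg c d
        - (e.coord 0 a * e.coord 1 c - e.coord 0 c * e.coord 1 a) * hg b d
        + (e.coord 0 a * e.coord 1 d - e.coord 0 d * e.coord 1 a) * hg b c
        + (e.coord 0 b * e.coord 1 c - e.coord 0 c * e.coord 1 b) * hg a d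
        - (e.coord 0 b * e.coord 1 d - e.coord 0 d * e.coord 1 b) * hg a c
        + (e.coord 0 c * e.coord 1 d - e.coord 0 d * e.coord 1 c) * hg a b

/-- Let `V` be a six-dimensional vector space over `F ∈ {ℝ,ℂ}` and let
`Ω ∈ Λ⁴V*` have length `2`.  Let
`V₄ := {v : ∀ w, ((w ∧ v) ⌟ Ω) ∧ ((w ∧ v) ⌟ Ω) = 0}`.  Then `V₄` is a four-dimensional
subspace, there is a two-dimensional complement `V₂` with `Ω = ω₂ ∧ ω₄`, where
`ω₂ ∈ Λ²Ann(V₄)` is nonzero decomposable and `ω₄ ∈ Λ²Ann(V₂)` has length two, and the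
infinitesimal stabilizer of `Ω` is the set of `f ∈ End(V)` preserving `V₄` with
`pr_{V₄} ∘ f|_{V₄} = -(tr f₂ / 2) id + f₄`, `f₄ ∈ sp(V₄, ω₄)`, `f₂ := pr_{V₂} ∘ f|_{V₂}`. -/
theorem stmt12 {F : Type*} [RCLike F] {V : Type*} [AddCommGroup V] [Module F V]
    [FiniteDimensional F V] (hV : finrank F V = 6)
    (Ω : V [⋀^Fin 4]→ₗ[F] F) (hΩ : AltHasLen 4 2 Ω) :
    ∃ V₄ : Submodule F V,
      (V₄ : Set V) = {v : V | ∀ w x y z t : V,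
          Ω ![w, v, x, y] * Ω ![w, v, z, t] - Ω ![w, v, x, z] * Ω ![w, v, y, t] +
            Ω ![w, v, x, t] * Ω ![w, v, y, z] = 0} ∧
      finrank F ↥V₄ = 4 ∧
      ∃ V₂ : Submodule F V, ∃ hc : IsCompl V₂ V₄, finrank F ↥V₂ = 2 ∧
        ∃ ω₂ ω₄ : V → V → F,
          (∃ a b : Module.Dual F V, (∀ x ∈ V₄, a x = 0) ∧ (∀ x ∈ V₄, b x = 0) ∧
            ω₂ = fun x y => a x * b y - a y * b x) ∧
          ω₂ ≠ 0 ∧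
          (∃ c₁ d₁ c₂ d₂ : Module.Dual F V,
            (∀ x ∈ V₂, c₁ x = 0) ∧ (∀ x ∈ V₂, d₁ x = 0) ∧
            (∀ x ∈ V₂, c₂ x = 0) ∧ (∀ x ∈ V₂, d₂ x = 0) ∧
            ω₄ = fun x y =>
              (c₁ x * d₁ y - c₁ y * d₁ x) + (c₂ x * d₂ y - c₂ y * d₂ x)) ∧
          (¬ ∃ c d : Module.Dual F V, ω₄ = fun x y => c x * d y - c y * d x) ∧
          (∀ a b c d : V,
            Ω ![a, b, c, d] =
              ω₂ a b * ω₄ c d - ω₂ a c * ω₄ b d + ω₂ a d * ω₄ b c +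
                ω₂ b c * ω₄ a d - ω₂ b d * ω₄ a c + ω₂ c d * ω₄ a b) ∧
          ({f : V →ₗ[F] V |
              ∀ a b c d : V,
                Ω ![f a, b, c, d] + Ω ![a, f b, c, d] + Ω ![a, b, f c, d] +
                  Ω ![a, b, c, f d] = 0} =
            {f : V →ₗ[F] V |
              (∀ x ∈ V₄, f x ∈ V₄) ∧
              ∃ f₄ : ↥V₄ →ₗ[F] ↥V₄,
                (∀ x y : ↥V₄, ω₄ ↑(f₄ x) ↑y + ω₄ ↑x ↑(f₄ y) = 0) ∧
                ∀ x : ↥V₄,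
                  (V₄.linearProjOfIsCompl V₂ hc.symm) (f ↑x) =
                    -((LinearMap.trace F ↥V₂)
                        ((V₂.linearProjOfIsCompl V₄ hc) ∘ₗ f ∘ₗ V₂.subtype) / 2) • x +
                      f₄ x}) := by
  obtain ⟨e, ω₂, ω₄, h2, h4, hO⟩ := normal_form hV Ω hΩ
  obtain ⟨V₄, a1, a2, V₂, hc, a3, a4, a5, a6, a7, a8⟩ := main_part Ω e ω₂ ω₄ h2 h4 hO
  exact ⟨V₄, a1, a2, V₂, hc, a3, ω₂, ω₄, a4, a5, a6, a7, hO, a8⟩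
end
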